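/- arXiv:1609.08743 — 2 statements merged into one kernel-verified Lean document; each statement's English description precedes it below -/
import Mathlib

section
/- Assume a ∈ (0,1), b ≥ 1−a, and that α, β, p, h satisfy either α ≥ √3·β, or (α < √3·β and 4h(β+p) ≥ p⁴). Let c, d > 0 with 0 < c/d ≤ (β+p)/k, let δ₁ = [(a−b−1) + √((p−1)² + 4β(c/d))]/2 (the larger root of (c/d−1)β + (a−b−1)δ − δ² = 0, and δ₁ < 0), and let δ ∈ (a−1, δ₁]. Then the function G(x) = [F(a−1−δ, b+δ; p; 1−x^d) − F(a−1, b; p; 1−x^c)]/(1−x^c) is strictly decreasing on (0,1), with limit C₂(δ) = 1/(p·B(a−δ, b+1+δ)) − 1/(p·B(a, b+1)) as x → 0⁺ and limit C₁(δ) = (d/(pc))·((c/d − 1)β + (a−b−1)δ − δ²) ≥ 0 as x → 1⁻; in particular G maps (0,1) onto (C₁(δ), C₂(δ)). -/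
open Real Set Filter Topology

/-- The Gaussian hypergeometric function `F(a,b;c;x)`, defined as a power series
with Pochhammer (shifted factorial) coefficients. -/
noncomputable def hyp (a b c x : ℝ) : ℝ :=
  ∑' n : ℕ, ((∏ i ∈ Finset.range n, (a + i)) * (∏ i ∈ Finset.range n, (b + i)) /
    ((∏ i ∈ Finset.range n, (c + i)) * (Nat.factorial n))) * x ^ n

/-- The Euler beta function `B(x,y) = Γ(x)Γ(y)/Γ(x+y)`. -/
noncomputable def betaFn (x y : ℝ) : ℝ := Real.Gamma x * Real.Gamma y / Real.Gamma (x + y)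

theorem summable_mul_pow_of_bounded {f : ℕ → ℝ} {M t : ℝ} (hf : ∀ n, |f n| ≤ M) (ht : |t| < 1) :
    Summable fun n => f n * t ^ n := by
  refine Summable.of_norm_bounded (g := fun n => M * |t| ^ n)
    ((summable_geometric_of_lt_one (abs_nonneg t) ht).mul_left M) fun n => ?_
  rw [Real.norm_eq_abs, abs_mul, abs_pow]
  exact mul_le_mul_of_nonneg_right (hf n) (by positivity)

theorem summable_succ_mul_pow_of_bounded {f : ℕ → ℝ} {M t : ℝ} (hf : ∀ n, |f n| ≤ M)
    (ht : |t| < 1) : Summable fun n : ℕ => ((n : ℝ) + 1) * f (n + 1) * t ^ n := by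
  have h1 : Summable fun n : ℕ => (n : ℝ) * |t| ^ n := by
    simpa using summable_pow_mul_geometric_of_norm_lt_one 1 (r := |t|) (by simpa using ht)
  have h2 := (h1.add (summable_geometric_of_lt_one (abs_nonneg t) ht)).mul_left M
  refine Summable.of_norm_bounded h2 fun n => ?_
  rw [Real.norm_eq_abs, abs_mul, abs_mul, abs_pow, abs_of_nonneg (by positivity : (0 : ℝ) ≤ n + 1)]
  calc ((n : ℝ) + 1) * |f (n + 1)| * |t| ^ n ≤ ((n : ℝ) + 1) * M * |t| ^ n := by
        gcongr; exact hf _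
    _ = M * (n * |t| ^ n + |t| ^ n) := by ring

theorem hasDerivAt_tsum_mul_pow {f : ℕ → ℝ} {M t : ℝ} (hf : ∀ n, |f n| ≤ M) (ht : |t| < 1) :
    HasDerivAt (fun t => ∑' n, f n * t ^ n) (∑' n : ℕ, ((n : ℝ) + 1) * f (n + 1) * t ^ n) t := by
  obtain ⟨R, htR, hR1⟩ := exists_between ht
  have hR0 : 0 ≤ R := (abs_nonneg t).trans htR.le
  have hM : 0 ≤ M := (abs_nonneg _).trans (hf 0)
  have hu : Summable fun n : ℕ => M * (n * R ^ (n - 1)) := by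
    refine Summable.mul_left M ((summable_nat_add_iff 1).1 ?_)
    have h := summable_succ_mul_pow_of_bounded (f := fun _ => 1) (M := 1) (t := R) (by simp)
      (by rwa [abs_of_nonneg hR0])
    simpa using h
  have key := hasDerivAt_tsum_of_isPreconnected (𝕜 := ℝ) (g := fun n t => f n * t ^ n)
    (g' := fun (n : ℕ) t => f n * (n * t ^ (n - 1))) (t := Metric.ball (0 : ℝ) R) (y₀ := 0) (y := t) hu
    Metric.isOpen_ball (convex_ball _ _).isPreconnected
    (fun n y _ => (hasDerivAt_pow n y).const_mul (f n))
    (fun n y hy => by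
      have hy' : |y| ≤ R := by simpa using (Metric.mem_ball.1 hy).le
      rw [Real.norm_eq_abs, abs_mul, abs_mul, abs_pow, Nat.abs_cast]
      gcongr
      exact hf n)
    (Metric.mem_ball_self ((abs_nonneg t).trans_lt htR))
    (summable_mul_pow_of_bounded hf (by simp)) (by simpa using htR)
  refine key.congr_deriv (Eq.symm ?_)
  have hs : Summable fun n : ℕ => f n * (n * t ^ (n - 1)) := by
    refine (summable_nat_add_iff 1).1 ?_
    refine (summable_succ_mul_pow_of_bounded hf ht).congr fun n => ?_
    push_cast [Nat.add_sub_cancel]; ring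
  rw [hs.tsum_eq_zero_add]
  simp only [Nat.cast_zero, zero_mul, mul_zero, zero_add]
  refine tsum_congr fun n => ?_
  push_cast [Nat.add_sub_cancel]; ring

/-- Multiplying the derivative of a power series with bounded coefficients by `1 - t`. -/
theorem one_sub_mul_tsum_succ {f : ℕ → ℝ} {M t : ℝ} (hf : ∀ n, |f n| ≤ M) (ht : |t| < 1) :
    (1 - t) * ∑' n : ℕ, ((n : ℝ) + 1) * f (n + 1) * t ^ n =
      ∑' n : ℕ, (((n : ℝ) + 1) * f (n + 1) - n * f n) * t ^ n := by
  have hs := summable_succ_mul_pow_of_bounded hf ht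
  have h2 : Summable fun n : ℕ => (n : ℝ) * f n * t ^ n := by
    refine (summable_nat_add_iff 1).1 ((hs.mul_left t).congr fun n => ?_)
    push_cast; ring
  have h3 : t * ∑' n : ℕ, ((n : ℝ) + 1) * f (n + 1) * t ^ n = ∑' n : ℕ, (n : ℝ) * f n * t ^ n := by
    rw [h2.tsum_eq_zero_add, ← tsum_mul_left]
    simp only [Nat.cast_zero, zero_mul, zero_add]
    refine tsum_congr fun n => ?_
    push_cast; ring
  rw [sub_mul, one_mul, h3, ← hs.tsum_sub h2]
  exact tsum_congr fun n => by ring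

/-- Chebyshev's inequality for two weights with monotone quotient. -/
theorem chebyshev_sum_mul_sum_le {f g s : ℕ → ℝ} (hfg : ∀ i j, i ≤ j → f i * g j ≤ f j * g i)
    (hs : Monotone s) (N : ℕ) :
    (∑ i ∈ Finset.range N, f i) * (∑ j ∈ Finset.range N, g j * s j) ≤
      (∑ i ∈ Finset.range N, f i * s i) * ∑ j ∈ Finset.range N, g j := by
  rw [Finset.sum_mul_sum, Finset.sum_mul_sum]
  have h1 : ∑ i ∈ Finset.range N, ∑ j ∈ Finset.range N, (f i * s i * g j - f i * (g j * s j)) =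
      ∑ i ∈ Finset.range N, ∑ j ∈ Finset.range N, (f j * s j * g i - f j * (g i * s i)) :=
    Finset.sum_comm
  have h2 : 0 ≤ ∑ i ∈ Finset.range N, ∑ j ∈ Finset.range N,
      ((f i * s i * g j - f i * (g j * s j)) + (f j * s j * g i - f j * (g i * s i))) := by
    refine Finset.sum_nonneg fun i _ => Finset.sum_nonneg fun j _ => ?_
    rcases le_total i j with h | h
    · nlinarith [mul_nonneg (sub_nonneg.2 (hfg i j h)) (sub_nonneg.2 (hs h))]
    · nlinarith [mul_nonneg (sub_nonneg.2 (hfg j i h)) (sub_nonneg.2 (hs h))]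
  simp only [Finset.sum_add_distrib] at h2
  rw [← h1] at h2
  simp only [Finset.sum_sub_distrib] at h2
  linarith

theorem chebyshev_tsum_mul_tsum_le {f g s : ℕ → ℝ} (hfg : ∀ i j, i ≤ j → f i * g j ≤ f j * g i)
    (hs : Monotone s) (hf : Summable f) (hg : Summable g) (hfs : Summable fun n => f n * s n)
    (hgs : Summable fun n => g n * s n) :
    (∑' n, f n) * (∑' n, g n * s n) ≤ (∑' n, f n * s n) * ∑' n, g n :=
  le_of_tendsto_of_tendsto'
    (hf.hasSum.tendsto_sum_nat.mul hgs.hasSum.tendsto_sum_nat)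
    (hfs.hasSum.tendsto_sum_nat.mul hg.hasSum.tendsto_sum_nat)
    (chebyshev_sum_mul_sum_le hfg hs)

/-- The coefficients of `F(A,B;p+1;·)` when `A + B = p + 1` and `A * B = p - m`. -/
noncomputable def balancedCoeff (p m : ℝ) (n : ℕ) : ℝ :=
  ∏ i ∈ Finset.range n, ((i : ℝ) ^ 2 + (p + 1) * i + (p - m)) / (((i : ℝ) + 1) * (i + p + 1))

theorem balancedCoeff_succ (p m : ℝ) (n : ℕ) :
    balancedCoeff p m (n + 1) = balancedCoeff p m n *
      (((n : ℝ) ^ 2 + (p + 1) * n + (p - m)) / (((n : ℝ) + 1) * (n + p + 1))) :=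
  Finset.prod_range_succ _ _

theorem balancedCoeff_zero (p m : ℝ) : balancedCoeff p m 0 = 1 := by
  simp [balancedCoeff]

theorem balancedCoeff_pos {p m : ℝ} (hm : 0 < m) (hmp : m < p) (n : ℕ) :
    0 < balancedCoeff p m n := by
  have hp : 0 < p := hm.trans hmp
  have := sub_pos.2 hmp
  exact Finset.prod_pos fun i _ => by positivity

theorem balancedCoeff_le_one {p m : ℝ} (hm : 0 < m) (hmp : m < p) (n : ℕ) :
    balancedCoeff p m n ≤ 1 := by
  have hp : 0 < p := hm.trans hmp
  have := sub_pos.2 hmp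
  refine Finset.prod_le_one (fun i _ => by positivity) fun i _ => ?_
  rw [div_le_one (by positivity)]
  have : (0 : ℝ) ≤ i := Nat.cast_nonneg i
  nlinarith

/-- Decreasing `m` makes the coefficients grow faster. -/
theorem balancedCoeff_mul_le {p m μ : ℝ} (hm : 0 < m) (hmμ : m ≤ μ) (hμ : μ < p) {i j : ℕ}
    (hij : i ≤ j) :
    balancedCoeff p m i * balancedCoeff p μ j ≤ balancedCoeff p m j * balancedCoeff p μ i := by
  have hp : 0 < p := (hm.trans_le hmμ).trans hμ
  have := sub_pos.2 hμ
  induction j, hij using Nat.le_induction with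
  | base => exact le_rfl
  | succ j _ ih =>
    rw [balancedCoeff_succ, balancedCoeff_succ, ← mul_assoc]
    have h1 := balancedCoeff_pos hm (hmμ.trans_lt hμ) j
    have h2 := balancedCoeff_pos (hm.trans_le hmμ) hμ i
    rw [mul_right_comm (balancedCoeff p m j)]
    refine mul_le_mul ih ?_ (by positivity) (by positivity)
    gcongr

/-- `F(A,B;p+1;t)` when `A + B = p + 1` and `A * B = p - m`. -/
noncomputable def balancedSeries (p m t : ℝ) : ℝ := ∑' n, balancedCoeff p m n * t ^ n

/-- The coefficients of `F(A,B;p+2;·)` when `A + B = p + 1` and `A * B = p - m`. -/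
noncomputable def raisedCoeff (p m : ℝ) (n : ℕ) : ℝ :=
  balancedCoeff p m n * ((p + 1) / (n + p + 1))

/-- `F(A,B;p+2;t)` when `A + B = p + 1` and `A * B = p - m`. -/
noncomputable def raisedSeries (p m t : ℝ) : ℝ := ∑' n, raisedCoeff p m n * t ^ n

theorem abs_balancedCoeff_le {p m : ℝ} (hm : 0 < m) (hmp : m < p) (n : ℕ) :
    |balancedCoeff p m n| ≤ 1 := by
  rw [abs_of_pos (balancedCoeff_pos hm hmp n)]
  exact balancedCoeff_le_one hm hmp n

theorem raisedCoeff_pos {p m : ℝ} (hm : 0 < m) (hmp : m < p) (n : ℕ) :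
    0 < raisedCoeff p m n := by
  have hp : 0 < p := hm.trans hmp
  have := balancedCoeff_pos hm hmp n
  unfold raisedCoeff
  positivity

theorem raisedCoeff_le_balancedCoeff {p m : ℝ} (hm : 0 < m) (hmp : m < p) (n : ℕ) :
    raisedCoeff p m n ≤ balancedCoeff p m n := by
  have hp : 0 < p := hm.trans hmp
  refine mul_le_of_le_one_right (balancedCoeff_pos hm hmp n).le ?_
  rw [div_le_one (by positivity)]
  have : (0 : ℝ) ≤ n := Nat.cast_nonneg n
  linarith

theorem abs_raisedCoeff_le {p m : ℝ} (hm : 0 < m) (hmp : m < p) (n : ℕ) :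
    |raisedCoeff p m n| ≤ 1 := by
  rw [abs_of_pos (raisedCoeff_pos hm hmp n)]
  exact (raisedCoeff_le_balancedCoeff hm hmp n).trans (balancedCoeff_le_one hm hmp n)

theorem raisedSeries_pos {p m t : ℝ} (hm : 0 < m) (hmp : m < p) (ht : t ∈ Ico (0 : ℝ) 1) :
    0 < raisedSeries p m t :=
  (summable_mul_pow_of_bounded (abs_raisedCoeff_le hm hmp)
      (by rw [abs_of_nonneg ht.1]; exact ht.2)).tsum_pos
    (fun n => mul_nonneg (raisedCoeff_pos hm hmp n).le (pow_nonneg ht.1 n)) 0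
    (by simpa using raisedCoeff_pos hm hmp 0)

theorem raisedSeries_lt_balancedSeries {p m t : ℝ} (hm : 0 < m) (hmp : m < p)
    (ht : t ∈ Ioo (0 : ℝ) 1) : raisedSeries p m t < balancedSeries p m t := by
  have hp : 0 < p := hm.trans hmp
  have ht' : |t| < 1 := by rw [abs_of_pos ht.1]; exact ht.2
  refine Summable.tsum_lt_tsum (i := 1)
    (fun n => mul_le_mul_of_nonneg_right (raisedCoeff_le_balancedCoeff hm hmp n)
      (pow_nonneg ht.1.le n)) ?_
    (summable_mul_pow_of_bounded (abs_raisedCoeff_le hm hmp) ht')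
    (summable_mul_pow_of_bounded (abs_balancedCoeff_le hm hmp) ht')
  refine mul_lt_mul_of_pos_right ?_ (pow_pos ht.1 1)
  refine mul_lt_of_lt_one_right (balancedCoeff_pos hm hmp 1) ?_
  rw [div_lt_one (by positivity)]
  push_cast
  linarith

theorem balancedSeries_zero (p m : ℝ) : balancedSeries p m 0 = 1 := by
  rw [balancedSeries, tsum_eq_single 0 (fun n hn => by simp [hn])]
  simp [balancedCoeff_zero]

theorem raisedSeries_zero {p m : ℝ} (hp : 0 < p) : raisedSeries p m 0 = 1 := by
  rw [raisedSeries, tsum_eq_single 0 (fun n hn => by simp [hn])]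
  have : p + 1 ≠ 0 := by positivity
  simp [raisedCoeff, balancedCoeff_zero, this]

theorem hasDerivAt_balancedSeries {p m t : ℝ} (hm : 0 < m) (hmp : m < p) (ht : |t| < 1) :
    HasDerivAt (balancedSeries p m)
      ((p - m) / (p + 1) * raisedSeries p m t / (1 - t)) t := by
  have hp : 0 < p := hm.trans hmp
  have h1t : 1 - t ≠ 0 := (sub_pos.2 (abs_lt.1 ht).2).ne'
  refine (hasDerivAt_tsum_mul_pow (abs_balancedCoeff_le hm hmp) ht).congr_deriv ?_
  rw [eq_div_iff h1t, mul_comm, one_sub_mul_tsum_succ (abs_balancedCoeff_le hm hmp) ht,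
    raisedSeries, ← tsum_mul_left]
  refine tsum_congr fun n => ?_
  rw [balancedCoeff_succ, raisedCoeff]
  have : (n : ℝ) + p + 1 ≠ 0 := by positivity
  field_simp
  ring

/-- The factor `s n` in `-((1 - t) Y)' = ∑ s n * y n * t ^ n`, where `Y = ∑ y n * t ^ n` is
`raisedSeries p m`. -/
noncomputable def raisedWeight (p m : ℝ) (n : ℕ) : ℝ := (2 * (n : ℝ) + 2 + m) / (n + p + 2)

theorem raisedWeight_monotone {p m : ℝ} (hm : 0 < m) (hmp : m < p) :
    Monotone (raisedWeight p m) := by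
  have hp : 0 < p := hm.trans hmp
  intro i j hij
  unfold raisedWeight
  have hij' : (i : ℝ) ≤ j := by exact_mod_cast hij
  rw [div_le_div_iff₀ (by positivity) (by positivity)]
  nlinarith

theorem abs_raisedCoeff_mul_raisedWeight_le {p m μ : ℝ} (hm : 0 < m) (hmp : m < p) (hμ : 0 < μ)
    (hμp : μ < p) (n : ℕ) : |raisedCoeff p m n * raisedWeight p μ n| ≤ 2 := by
  have hp : 0 < p := hm.trans hmp
  have h : |raisedWeight p μ n| ≤ 2 := by
    unfold raisedWeight
    rw [abs_of_nonneg (by positivity), div_le_iff₀ (by positivity)]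
    linarith
  rw [abs_mul]
  calc _ ≤ 1 * (2 : ℝ) := by
        gcongr
        exact abs_raisedCoeff_le hm hmp n
    _ = 2 := one_mul 2

theorem hasDerivAt_raisedSeries {p m t : ℝ} (hm : 0 < m) (hmp : m < p) (ht : |t| < 1) :
    HasDerivAt (raisedSeries p m)
      ((raisedSeries p m t - ∑' n, raisedCoeff p m n * raisedWeight p m n * t ^ n) / (1 - t)) t := by
  have hp : 0 < p := hm.trans hmp
  have h1t : 1 - t ≠ 0 := (sub_pos.2 (abs_lt.1 ht).2).ne'
  refine (hasDerivAt_tsum_mul_pow (abs_raisedCoeff_le hm hmp) ht).congr_deriv ?_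
  rw [eq_div_iff h1t, mul_comm, one_sub_mul_tsum_succ (abs_raisedCoeff_le hm hmp) ht,
    raisedSeries, ← (summable_mul_pow_of_bounded (abs_raisedCoeff_le hm hmp) ht).tsum_sub
      (summable_mul_pow_of_bounded (abs_raisedCoeff_mul_raisedWeight_le hm hmp hm hmp) ht)]
  refine tsum_congr fun n => ?_
  rw [raisedCoeff, raisedCoeff, balancedCoeff_succ, raisedWeight]
  push_cast
  have h1 : (n : ℝ) + p + 1 ≠ 0 := by positivity
  have h2 : (n : ℝ) + p + 2 ≠ 0 := by positivity
  have h3 : (n : ℝ) + 1 + p + 1 ≠ 0 := by positivity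
  field_simp
  ring

theorem raisedSeries_weight_mul_le {p m μ r z t : ℝ} (hm : 0 < m) (hmμ : m ≤ μ) (hμ : μ < p)
    (hr0 : 0 < r) (hr1 : r ≤ 1) (hr2 : r * (2 + μ) ≤ 2) (hz : 0 ≤ z)
    (hzt : z ≤ t) (ht : t < 1) :
    r * (∑' n, raisedCoeff p μ n * raisedWeight p μ n * z ^ n) * raisedSeries p m t ≤
      (∑' n, raisedCoeff p m n * raisedWeight p m n * t ^ n) * raisedSeries p μ z := by
  have hμ0 := hm.trans_le hmμ
  have hmp := hmμ.trans_lt hμ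
  have hp : 0 < p := hm.trans hmp
  have ht0 : 0 ≤ t := hz.trans hzt
  have ht' : |t| < 1 := by rwa [abs_of_nonneg ht0]
  have hz' : |z| < 1 := by rw [abs_of_nonneg hz]; exact hzt.trans_lt ht
  have hcheb := chebyshev_tsum_mul_tsum_le (f := fun n => raisedCoeff p m n * t ^ n)
    (g := fun n => raisedCoeff p μ n * z ^ n) (s := raisedWeight p μ) ?_
    (raisedWeight_monotone hμ0 hμ)
    (summable_mul_pow_of_bounded (abs_raisedCoeff_le hm hmp) ht')
    (summable_mul_pow_of_bounded (abs_raisedCoeff_le hμ0 hμ) hz')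
    ((summable_mul_pow_of_bounded (abs_raisedCoeff_mul_raisedWeight_le hm hmp hμ0 hμ) ht').congr
      fun n => by ring)
    ((summable_mul_pow_of_bounded (abs_raisedCoeff_mul_raisedWeight_le hμ0 hμ hμ0 hμ) hz').congr
      fun n => by ring)
  · have hle : r * ∑' n, raisedCoeff p m n * t ^ n * raisedWeight p μ n ≤
        ∑' n, raisedCoeff p m n * raisedWeight p m n * t ^ n := by
      rw [← tsum_mul_left]
      refine Summable.tsum_le_tsum (fun n => ?_)
        (((summable_mul_pow_of_bounded (abs_raisedCoeff_mul_raisedWeight_le hm hmp hμ0 hμ)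
          ht').mul_left r).congr fun n => by ring)
        (summable_mul_pow_of_bounded (abs_raisedCoeff_mul_raisedWeight_le hm hmp hm hmp) ht')
      have hw : r * raisedWeight p μ n ≤ raisedWeight p m n := by
        unfold raisedWeight
        rw [← mul_div_assoc]
        gcongr
        have : (0 : ℝ) ≤ n := Nat.cast_nonneg n
        nlinarith
      calc _ = raisedCoeff p m n * (r * raisedWeight p μ n) * t ^ n := by ring
        _ ≤ _ := by
          have := (raisedCoeff_pos hm hmp n).le
          gcongr
    have hpos := (raisedSeries_pos hμ0 hμ ⟨hz, hzt.trans_lt ht⟩).le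
    have h0 := mul_le_mul_of_nonneg_right hle hpos
    refine le_trans ?_ h0
    have h1 := mul_le_mul_of_nonneg_left hcheb hr0.le
    unfold raisedSeries
    calc _ = r * ((∑' n, raisedCoeff p m n * t ^ n) *
          ∑' n, raisedCoeff p μ n * z ^ n * raisedWeight p μ n) := by
          rw [mul_comm (∑' n, raisedCoeff p m n * t ^ n), mul_assoc]
          congr 3
          ext n
          ring
      _ ≤ _ := h1
      _ = _ := by ring
  · intro i j hij
    have hb : raisedCoeff p m i * raisedCoeff p μ j ≤ raisedCoeff p m j * raisedCoeff p μ i := by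
      unfold raisedCoeff
      calc _ = balancedCoeff p m i * balancedCoeff p μ j *
            ((p + 1) / (i + p + 1) * ((p + 1) / (j + p + 1))) := by ring
        _ ≤ balancedCoeff p m j * balancedCoeff p μ i *
            ((p + 1) / (i + p + 1) * ((p + 1) / (j + p + 1))) := by
            refine mul_le_mul_of_nonneg_right (balancedCoeff_mul_le hm hmμ hμ hij) ?_
            positivity
        _ = _ := by ring
    have hpow : t ^ i * z ^ j ≤ t ^ j * z ^ i := by
      obtain ⟨l, rfl⟩ := Nat.exists_eq_add_of_le hij
      calc t ^ i * z ^ (i + l) = t ^ i * z ^ i * z ^ l := by ring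
        _ ≤ t ^ i * z ^ i * t ^ l := by gcongr
        _ = _ := by ring
    calc _ = (raisedCoeff p m i * raisedCoeff p μ j) * (t ^ i * z ^ j) := by ring
      _ ≤ (raisedCoeff p m j * raisedCoeff p μ i) * (t ^ j * z ^ i) := by
        have h1 := (raisedCoeff_pos hm hmp j).le
        have h2 := (raisedCoeff_pos hμ0 hμ i).le
        gcongr
      _ = _ := by ring

theorem hyp_coeff_succ {A B p : ℝ} (hp : 0 < p) (hAB : A + B + 1 = p) (n : ℕ) :
    (∏ i ∈ Finset.range (n + 1), (A + i)) * (∏ i ∈ Finset.range (n + 1), (B + i)) /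
      ((∏ i ∈ Finset.range (n + 1), (p + i)) * (Nat.factorial (n + 1))) =
      A * B / p * (balancedCoeff p (-(A * B)) n / (n + 1)) := by
  induction n with
  | zero => simp [balancedCoeff_zero]
  | succ n ih =>
    rw [Finset.prod_range_succ _ (n + 1), Finset.prod_range_succ _ (n + 1),
      Finset.prod_range_succ _ (n + 1), Nat.factorial_succ (n + 1), balancedCoeff_succ]
    push_cast
    have h1 : (p : ℝ) + (n + 1) ≠ 0 := by positivity
    have h2 : (n : ℝ) + p + 1 ≠ 0 := by positivity
    have h3 : (n : ℝ) + 1 + 1 ≠ 0 := by positivity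
    have h4 : (n : ℝ) + 1 ≠ 0 := by positivity
    have h5 : (∏ i ∈ Finset.range (n + 1), (p + (i : ℝ))) ≠ 0 :=
      (Finset.prod_pos fun i _ => by positivity).ne'
    have h6 : ((Nat.factorial (n + 1) : ℕ) : ℝ) ≠ 0 := by positivity
    calc _ = (∏ i ∈ Finset.range (n + 1), (A + (i : ℝ))) *
          (∏ i ∈ Finset.range (n + 1), (B + (i : ℝ))) /
          ((∏ i ∈ Finset.range (n + 1), (p + (i : ℝ))) * (Nat.factorial (n + 1))) *
          ((A + (n + 1)) * (B + (n + 1)) / ((p + (n + 1)) * (n + 1 + 1))) := by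
          field_simp
      _ = A * B / p * (balancedCoeff p (-(A * B)) n / (n + 1)) *
          ((A + (n + 1)) * (B + (n + 1)) / ((p + (n + 1)) * (n + 1 + 1))) := by rw [ih]
      _ = A * B / p * (balancedCoeff p (-(A * B)) n *
          (((n : ℝ) ^ 2 + (p + 1) * n + (p - -(A * B))) / (((n : ℝ) + 1) * (n + p + 1))) /
            (n + 1 + 1)) := by
          have : (A + (n + 1)) * (B + (n + 1)) = (n : ℝ) ^ 2 + (p + 1) * n + (p - -(A * B)) := by
            rw [← hAB]; ring
          rw [this, show p + ((n : ℝ) + 1) = n + p + 1 by ring]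
          field_simp

theorem hasDerivAt_hyp {A B p m t : ℝ} (hAB : A + B + 1 = p) (hm : m = -(A * B)) (hm0 : 0 < m)
    (hmp : m < p) (ht : |t| < 1) :
    HasDerivAt (hyp A B p) (-(m / p) * balancedSeries p m t) t := by
  have hp : 0 < p := hm0.trans hmp
  have hbd : ∀ n : ℕ, |(∏ i ∈ Finset.range n, (A + i)) * (∏ i ∈ Finset.range n, (B + i)) /
      ((∏ i ∈ Finset.range n, (p + i)) * (Nat.factorial n))| ≤ max 1 |A * B / p| := by
    intro n
    cases n with
    | zero => simp
    | succ n =>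
      rw [hyp_coeff_succ hp hAB, ← hm, abs_mul]
      refine le_trans (mul_le_of_le_one_right (abs_nonneg _) ?_) (le_max_right _ _)
      have h := balancedCoeff_pos hm0 hmp n
      rw [abs_of_pos (by positivity), div_le_one (by positivity)]
      have : (0 : ℝ) ≤ n := Nat.cast_nonneg n
      linarith [balancedCoeff_le_one hm0 hmp n]
  refine (hasDerivAt_tsum_mul_pow hbd ht).congr_deriv ?_
  rw [balancedSeries, ← tsum_mul_left]
  refine tsum_congr fun n => ?_
  rw [hyp_coeff_succ hp hAB, ← hm]
  have : (n : ℝ) + 1 ≠ 0 := by positivity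
  rw [hm]
  field_simp

theorem sum_hyp_coeff {A B p : ℝ} (hp : 0 < p) (hAB : A + B + 1 = p) (n : ℕ) :
    ∑ k ∈ Finset.range (n + 1), (∏ i ∈ Finset.range k, (A + i)) *
      (∏ i ∈ Finset.range k, (B + i)) / ((∏ i ∈ Finset.range k, (p + i)) * (Nat.factorial k)) =
      (∏ i ∈ Finset.range n, (A + 1 + i)) * (∏ i ∈ Finset.range n, (B + 1 + i)) /
        ((∏ i ∈ Finset.range n, (p + i)) * (Nat.factorial n)) := by
  induction n with
  | zero => simp
  | succ n ih =>
    have hshift : ∀ C : ℝ, ∏ i ∈ Finset.range (n + 1), (C + (i : ℝ)) =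
        (∏ i ∈ Finset.range n, (C + 1 + (i : ℝ))) * C := by
      intro C
      rw [Finset.prod_range_succ']
      push_cast
      simp only [add_zero, add_assoc, add_comm (1 : ℝ)]
    rw [Finset.sum_range_succ, ih, hshift A, hshift B, Finset.prod_range_succ (fun i => p + (i : ℝ)),
      Finset.prod_range_succ (fun i => A + 1 + (i : ℝ)),
      Finset.prod_range_succ (fun i => B + 1 + (i : ℝ)), Nat.factorial_succ]
    push_cast
    have h1 : (p : ℝ) + n ≠ 0 := by positivity
    have h4 : (n : ℝ) + 1 ≠ 0 := by positivity
    have h5 : (∏ i ∈ Finset.range n, (p + (i : ℝ))) ≠ 0 :=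
      (Finset.prod_pos fun i _ => by positivity).ne'
    have h6 : ((Nat.factorial n : ℕ) : ℝ) ≠ 0 := by positivity
    field_simp
    rw [← hAB]
    ring

/-- Gauss's summation formula in the case `C = A + B + 1`, as an Abel limit. -/
theorem tendsto_hyp_one {A B p : ℝ} (hAB : A + B + 1 = p) (hp : 0 < p) (hA : 0 < A + 1)
    (hB : 0 < B + 1) :
    Tendsto (hyp A B p) (𝓝[<] 1) (𝓝 (1 / (p * betaFn (A + 1) (B + 1)))) := by
  refine Real.tendsto_tsum_powerSeries_nhdsWithin_lt ?_
  rw [← tendsto_add_atTop_iff_nat 2]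
  simp only [show ∀ n : ℕ, n + 2 = (n + 1) + 1 from fun n => rfl, sum_hyp_coeff hp hAB]
  have hlim : Tendsto (fun n : ℕ => Real.GammaSeq p n / (Real.GammaSeq (A + 1) n *
      Real.GammaSeq (B + 1) n) * ((n : ℝ) / (n + 1))) atTop
      (𝓝 (Gamma p / (Gamma (A + 1) * Gamma (B + 1)) * 1)) := by
    refine ((Real.GammaSeq_tendsto_Gamma p).div ((Real.GammaSeq_tendsto_Gamma (A + 1)).mul
      (Real.GammaSeq_tendsto_Gamma (B + 1))) ?_).mul (tendsto_natCast_div_add_atTop 1)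
    exact (mul_pos (Gamma_pos_of_pos hA) (Gamma_pos_of_pos hB)).ne'
  have hval : Gamma p / (Gamma (A + 1) * Gamma (B + 1)) * 1 =
      1 / (p * betaFn (A + 1) (B + 1)) := by
    have h1 := (Gamma_pos_of_pos hA).ne'
    have h2 := (Gamma_pos_of_pos hB).ne'
    have h3 := (Gamma_pos_of_pos hp).ne'
    rw [betaFn, show A + 1 + (B + 1) = p + 1 by rw [← hAB]; ring, Gamma_add_one hp.ne']
    field_simp
  rw [hval] at hlim
  refine hlim.congr' ?_
  filter_upwards [eventually_gt_atTop 0] with n hn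
  have hn' : (0 : ℝ) < n := by exact_mod_cast hn
  have h1 : (∏ j ∈ Finset.range (n + 1), (p + (j : ℝ))) ≠ 0 :=
    (Finset.prod_pos fun i _ => by positivity).ne'
  have h2 : (∏ j ∈ Finset.range (n + 1), (A + 1 + (j : ℝ))) ≠ 0 :=
    (Finset.prod_pos fun i _ => by positivity).ne'
  have h3 : (∏ j ∈ Finset.range (n + 1), (B + 1 + (j : ℝ))) ≠ 0 :=
    (Finset.prod_pos fun i _ => by positivity).ne'
  have h6 : ((Nat.factorial n : ℕ) : ℝ) ≠ 0 := by positivity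
  have hpow : (n : ℝ) ^ (A + 1) * (n : ℝ) ^ (B + 1) = (n : ℝ) ^ p * n := by
    rw [← rpow_add hn', show A + 1 + (B + 1) = p + 1 by rw [← hAB]; ring, rpow_add_one hn'.ne']
  have h7 := (rpow_pos_of_pos hn' p).ne'
  have h8 := (rpow_pos_of_pos hn' (A + 1)).ne'
  have h9 := (rpow_pos_of_pos hn' (B + 1)).ne'
  have h10 : (n : ℝ) + 1 ≠ 0 := by positivity
  rw [Nat.factorial_succ]
  push_cast
  unfold Real.GammaSeq
  field_simp
  linear_combination (-1 : ℝ) * hpow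

theorem rpow_mem_Ioo {u r : ℝ} (hu : u ∈ Ioo (0 : ℝ) 1) (hr : 0 < r) : u ^ r ∈ Ioo (0 : ℝ) 1 :=
  ⟨rpow_pos_of_pos hu.1 r, rpow_lt_one hu.1.le hu.2 hr⟩

theorem abs_one_sub_lt_one {u : ℝ} (hu : u ∈ Ioc (0 : ℝ) 1) : |1 - u| < 1 := by
  rw [abs_lt]; constructor <;> linarith [hu.1, hu.2]

theorem rpow_mem_Ioc {u r : ℝ} (hu : u ∈ Ioc (0 : ℝ) 1) (hr : 0 < r) : u ^ r ∈ Ioc (0 : ℝ) 1 :=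
  ⟨rpow_pos_of_pos hu.1 r, rpow_le_one hu.1.le hu.2 hr.le⟩

theorem rpow_mul_raisedSeries_le {p m μ r u : ℝ} (hm : 0 < m) (hmμ : m ≤ μ) (hμ : μ < p)
    (hr0 : 0 < r) (hr1 : r ≤ 1) (hr2 : r * (2 + μ) ≤ 2) (hu : u ∈ Ioo (0 : ℝ) 1) :
    u ^ (1 - r) * raisedSeries p m (1 - u) ≤ raisedSeries p μ (1 - u ^ r) := by
  have hμ0 := hm.trans_le hmμ
  have hmp := hmμ.trans_lt hμ
  have hp : 0 < p := hm.trans hmp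
  set D : ℝ → ℝ := fun u => Real.log (raisedSeries p μ (1 - u ^ r)) - (1 - r) * Real.log u -
    Real.log (raisedSeries p m (1 - u)) with hD
  have hmem : ∀ v ∈ Ioc (0 : ℝ) 1, 1 - v ∈ Ico (0 : ℝ) 1 := fun v hv =>
    ⟨by linarith [hv.2], by linarith [hv.1]⟩
  have hder : ∀ v ∈ Ioc (0 : ℝ) 1, HasDerivAt D
      ((r * (∑' n, raisedCoeff p μ n * raisedWeight p μ n * (1 - v ^ r) ^ n) /
          raisedSeries p μ (1 - v ^ r) -
        (∑' n, raisedCoeff p m n * raisedWeight p m n * (1 - v) ^ n) /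
          raisedSeries p m (1 - v)) / v) v := by
    intro v hv
    have hvr := rpow_mem_Ioc hv hr0
    have hZ := raisedSeries_pos hμ0 hμ (hmem _ hvr)
    have hY := raisedSeries_pos hm hmp (hmem _ hv)
    have h1 : HasDerivAt (fun v : ℝ => 1 - v ^ r) (-(r * v ^ (r - 1))) v := by
      simpa using (hasDerivAt_rpow_const (p := r) (Or.inl hv.1.ne')).const_sub 1
    have h2 : HasDerivAt (fun v : ℝ => 1 - v) (-1) v := by
      simpa using (hasDerivAt_id v).const_sub 1
    have h3 := (hasDerivAt_raisedSeries hμ0 hμ (abs_one_sub_lt_one hvr)).comp v h1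
    have h4 := (hasDerivAt_raisedSeries hm hmp (abs_one_sub_lt_one hv)).comp v h2
    refine (((h3.log hZ.ne').sub ((hasDerivAt_log hv.1.ne').const_mul (1 - r))).sub
      (h4.log hY.ne')).congr_deriv ?_
    have hv0 := hv.1.ne'
    have hvr0 := hvr.1.ne'
    simp only [Function.comp_apply, sub_sub_cancel]
    rw [rpow_sub_one hv0]
    field_simp
    ring
  have hanti : AntitoneOn D (Ioc 0 1) := by
    refine antitoneOn_of_deriv_nonpos (convex_Ioc 0 1)
      (fun v hv => (hder v hv).continuousAt.continuousWithinAt)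
      (fun v hv => (hder v (interior_subset hv)).differentiableAt.differentiableWithinAt) ?_
    intro v hv
    rw [interior_Ioc] at hv
    have hv' : v ∈ Ioc (0 : ℝ) 1 := ⟨hv.1, hv.2.le⟩
    have hvr := rpow_mem_Ioo hv hr0
    rw [(hder v hv').deriv]
    refine div_nonpos_of_nonpos_of_nonneg (sub_nonpos.2 ?_) hv.1.le
    rw [div_le_div_iff₀ (raisedSeries_pos hμ0 hμ (hmem _ (Ioo_subset_Ioc_self hvr)))
      (raisedSeries_pos hm hmp (hmem _ hv'))]
    refine raisedSeries_weight_mul_le hm hmμ hμ hr0 hr1 hr2 (by linarith [hvr.2]) ?_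
      (by linarith [hv.1])
    have : v ^ (1 : ℝ) ≤ v ^ r := rpow_le_rpow_of_exponent_ge hv.1 hv.2.le hr1
    rw [rpow_one] at this
    linarith
  have hu' : u ∈ Ioc (0 : ℝ) 1 := Ioo_subset_Ioc_self hu
  have h := hanti hu' (right_mem_Ioc.2 one_pos) hu.2.le
  simp only [hD, one_rpow, sub_self, raisedSeries_zero hp, Real.log_one, mul_zero] at h
  have hY := raisedSeries_pos hm hmp (hmem _ hu')
  rw [← Real.log_le_log_iff (mul_pos (rpow_pos_of_pos hu.1 _) hY)
    (raisedSeries_pos hμ0 hμ (hmem _ (rpow_mem_Ioc hu' hr0))),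
    Real.log_mul (rpow_pos_of_pos hu.1 _).ne' hY.ne', Real.log_rpow hu.1]
  linarith

theorem strictAntiOn_balanced_sub {p m μ r : ℝ} (hm : 0 < m) (hmμ : m ≤ μ) (hμ : μ < p)
    (hr0 : 0 < r) (hr1 : r < 1) (hr2 : r * (2 + μ) ≤ 2)
    (hdisc : m * (r * (p + 1) - 1 - m) ≤ (p - μ) * μ * r ^ 2) :
    StrictAntiOn (fun u : ℝ => μ * balancedSeries p μ (1 - u ^ r) -
      m / r * (u ^ (1 - r) * balancedSeries p m (1 - u))) (Ioc 0 1) := by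
  have hμ0 := hm.trans_le hmμ
  have hmp := hmμ.trans_lt hμ
  have hp : 0 < p := hm.trans hmp
  have hder : ∀ v ∈ Ioc (0 : ℝ) 1, HasDerivAt (fun u : ℝ => μ * balancedSeries p μ (1 - u ^ r) -
      m / r * (u ^ (1 - r) * balancedSeries p m (1 - u)))
      (-(μ * (p - μ) * r ^ 2 * raisedSeries p μ (1 - v ^ r) + m * v ^ (1 - r) *
        ((1 - r) * (p + 1) * balancedSeries p m (1 - v) - (p - m) * raisedSeries p m (1 - v))) /
          (r * (p + 1) * v)) v := by
    intro v hv
    have hvr := rpow_mem_Ioc hv hr0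
    have h1 : HasDerivAt (fun v : ℝ => 1 - v ^ r) (-(r * v ^ (r - 1))) v := by
      simpa using (hasDerivAt_rpow_const (p := r) (Or.inl hv.1.ne')).const_sub 1
    have h2 : HasDerivAt (fun v : ℝ => 1 - v) (-1) v := by
      simpa using (hasDerivAt_id v).const_sub 1
    have h3 := (hasDerivAt_balancedSeries hμ0 hμ (abs_one_sub_lt_one hvr)).comp v h1
    have h4 := (hasDerivAt_balancedSeries hm hmp (abs_one_sub_lt_one hv)).comp v h2
    have h5 := hasDerivAt_rpow_const (x := v) (p := 1 - r) (Or.inl hv.1.ne')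
    refine ((h3.const_mul μ).sub ((h5.mul h4).const_mul (m / r))).congr_deriv ?_
    have hv0 := hv.1.ne'
    have hvr0 := hvr.1.ne'
    simp only [Function.comp_apply, sub_sub_cancel]
    rw [rpow_sub_one hv0, rpow_sub_one hv0]
    field_simp
    ring
  refine strictAntiOn_of_deriv_neg (convex_Ioc 0 1)
    (fun v hv => (hder v hv).continuousAt.continuousWithinAt) ?_
  intro v hv
  rw [interior_Ioc] at hv
  have hv' : v ∈ Ioc (0 : ℝ) 1 := ⟨hv.1, hv.2.le⟩
  rw [(hder v hv').deriv]
  refine div_neg_of_neg_of_pos (neg_neg_of_pos ?_) (mul_pos (by positivity) hv.1)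
  have hXY := raisedSeries_lt_balancedSeries hm hmp (t := 1 - v)
    ⟨by linarith [hv.2], by linarith [hv.1]⟩
  have hY := raisedSeries_pos hm hmp (t := 1 - v) ⟨by linarith [hv.2], by linarith [hv.1]⟩
  have hvr := rpow_mem_Ioo hv hr0
  have hZ := raisedSeries_pos hμ0 hμ (t := 1 - v ^ r) ⟨by linarith [hvr.2], by linarith [hvr.1]⟩
  have hkey := rpow_mul_raisedSeries_le hm hmμ hμ hr0 hr1.le hr2 hv
  have hq := rpow_pos_of_pos hv.1 (1 - r)
  set X := balancedSeries p m (1 - v)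
  set Y := raisedSeries p m (1 - v)
  set Z := raisedSeries p μ (1 - v ^ r)
  set w := v ^ (1 - r)
  have hlow : m * w * (-(r * (p + 1) - 1 - m) * Y) <
      m * w * ((1 - r) * (p + 1) * X - (p - m) * Y) := by
    refine mul_lt_mul_of_pos_left ?_ (by positivity)
    have : (1 - r) * (p + 1) * Y < (1 - r) * (p + 1) * X :=
      mul_lt_mul_of_pos_left hXY (mul_pos (by linarith) (by linarith))
    linarith
  have hP : 0 < p - μ := sub_pos.2 hμ
  rcases le_total (r * (p + 1) - 1 - m) 0 with hN | hN
  · have : 0 ≤ m * w * (-(r * (p + 1) - 1 - m) * Y) := by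
      have := neg_nonneg.2 hN
      positivity
    have : 0 < μ * (p - μ) * r ^ 2 * Z := by positivity
    linarith
  · have h1 : m * (r * (p + 1) - 1 - m) * (w * Y) ≤ m * (r * (p + 1) - 1 - m) * Z :=
      mul_le_mul_of_nonneg_left hkey (by positivity)
    have h2 := mul_le_mul_of_nonneg_right hdisc hZ.le
    nlinarith

theorem hasDerivAt_hyp_sub {A B A' B' p m μ r t : ℝ} (hAB : A + B + 1 = p)
    (hAB' : A' + B' + 1 = p) (hmAB : m = -(A * B)) (hμAB : μ = -(A' * B')) (hm : 0 < m)
    (hmp : m < p) (hμ0 : 0 < μ) (hμ : μ < p) (hr0 : 0 < r) (ht : t ∈ Ico (0 : ℝ) 1) :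
    HasDerivAt (fun t => hyp A B p (1 - (1 - t) ^ r⁻¹) - hyp A' B' p t)
      (p⁻¹ * (μ * balancedSeries p μ (1 - ((1 - t) ^ r⁻¹) ^ r) -
        m / r * (((1 - t) ^ r⁻¹) ^ (1 - r) * balancedSeries p m (1 - (1 - t) ^ r⁻¹)))) t := by
  have hp : 0 < p := hm.trans hmp
  have h1t : 0 < 1 - t := sub_pos.2 ht.2
  have hu : (1 - t) ^ r⁻¹ ∈ Ioc (0 : ℝ) 1 :=
    rpow_mem_Ioc ⟨h1t, by linarith [ht.1]⟩ (inv_pos.2 hr0)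
  have h1 : HasDerivAt (fun t : ℝ => 1 - (1 - t) ^ r⁻¹) (r⁻¹ * (1 - t) ^ (r⁻¹ - 1)) t := by
    have h2 : HasDerivAt (fun v : ℝ => 1 - v) (-1) t := by
      simpa using (hasDerivAt_id t).const_sub 1
    exact ((h2.rpow_const (p := r⁻¹) (Or.inl h1t.ne')).const_sub 1).congr_deriv (by ring)
  have h2 := (hasDerivAt_hyp hAB hmAB hm hmp (abs_one_sub_lt_one hu)).comp t h1
  have h3 := hasDerivAt_hyp hAB' hμAB hμ0 hμ (t := t) (by rw [abs_of_nonneg ht.1]; exact ht.2)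
  refine (h2.sub h3).congr_deriv ?_
  have e1 : ((1 - t) ^ r⁻¹) ^ r = 1 - t := rpow_inv_rpow h1t.le hr0.ne'
  have e2 : ((1 - t) ^ r⁻¹) ^ (1 - r) = (1 - t) ^ (r⁻¹ - 1) := by
    rw [← rpow_mul h1t.le]
    congr 1
    field_simp
  rw [e1, e2, sub_sub_cancel]
  field_simp
  ring

theorem strictConvexOn_hyp_sub {A B A' B' p m μ r : ℝ} (hAB : A + B + 1 = p)
    (hAB' : A' + B' + 1 = p) (hmAB : m = -(A * B)) (hμAB : μ = -(A' * B')) (hm : 0 < m)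
    (hmμ : m ≤ μ) (hμ : μ < p) (hr0 : 0 < r) (hr1 : r < 1) (hr2 : r * (2 + μ) ≤ 2)
    (hdisc : m * (r * (p + 1) - 1 - m) ≤ (p - μ) * μ * r ^ 2) :
    StrictConvexOn ℝ (Ico 0 1) (fun t => hyp A B p (1 - (1 - t) ^ r⁻¹) - hyp A' B' p t) := by
  have hμ0 := hm.trans_le hmμ
  have hmp := hmμ.trans_lt hμ
  have hp : 0 < p := hm.trans hmp
  have hder := fun t (ht : t ∈ Ico (0 : ℝ) 1) =>
    hasDerivAt_hyp_sub hAB hAB' hmAB hμAB hm hmp hμ0 hμ hr0 ht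
  refine StrictMonoOn.strictConvexOn_of_deriv (convex_Ico 0 1)
    (fun t ht => (hder t ht).continuousAt.continuousWithinAt) ?_
  intro s hs t ht hst
  have hs' := interior_subset hs
  have ht' := interior_subset ht
  rw [(hder s hs').deriv, (hder t ht').deriv]
  refine mul_lt_mul_of_pos_left ?_ (inv_pos.2 hp)
  have hmem : ∀ t ∈ Ico (0 : ℝ) 1, (1 - t) ^ r⁻¹ ∈ Ioc (0 : ℝ) 1 := fun t ht =>
    rpow_mem_Ioc ⟨by linarith [ht.2], by linarith [ht.1]⟩ (inv_pos.2 hr0)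
  exact strictAntiOn_balanced_sub hm hmμ hμ hr0 hr1 hr2 hdisc (hmem t ht') (hmem s hs')
    (rpow_lt_rpow (by linarith [ht'.2]) (by linarith) (inv_pos.2 hr0))

theorem StrictAntiOn.image_Ioo_of_tendsto {f : ℝ → ℝ} {a b l m : ℝ} (hab : a < b)
    (hf : StrictAntiOn f (Ioo a b)) (hc : ContinuousOn f (Ioo a b))
    (ha : Tendsto f (𝓝[>] a) (𝓝 m)) (hb : Tendsto f (𝓝[<] b) (𝓝 l)) :
    f '' Ioo a b = Ioo l m := by
  apply Subset.antisymm
  · rintro _ ⟨x, hx, rfl⟩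
    obtain ⟨y, hay, hyx⟩ := exists_between hx.1
    obtain ⟨z, hxz, hzb⟩ := exists_between hx.2
    have hy : y ∈ Ioo a b := ⟨hay, hyx.trans hx.2⟩
    have hz : z ∈ Ioo a b := ⟨hx.1.trans hxz, hzb⟩
    constructor
    · refine (le_of_tendsto hb ?_).trans_lt (hf hx hz hxz)
      filter_upwards [Ioo_mem_nhdsLT hzb] with w hw
      exact (hf hz ⟨hz.1.trans hw.1, hw.2⟩ hw.1).le
    · refine (hf hy hx hyx).trans_le (ge_of_tendsto ha ?_)
      filter_upwards [Ioo_mem_nhdsGT hay] with w hw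
      exact (hf ⟨hw.1, hw.2.trans hy.2⟩ hy hw.2).le
  · have := nhdsLT_neBot_of_exists_lt ⟨a, hab⟩
    have := nhdsGT_neBot_of_exists_gt ⟨b, hab⟩
    exact isPreconnected_Ioo.intermediate_value_Ioo (le_principal_iff.2 (Ioo_mem_nhdsLT hab))
      (le_principal_iff.2 (Ioo_mem_nhdsGT hab)) hc hb ha

theorem hyp_zero (A B C : ℝ) : hyp A B C 0 = 1 := by
  rw [hyp, tsum_eq_single 0 (fun n hn => by simp [hn])]
  simp

theorem mul_sub_le_of_discriminant {α β p h k m r : ℝ} (hα : 0 < α) (hβ : 0 < β)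
    (hp : p = α + β) (hh : h = α * β * (p + β)) (hk : k = β * (p + 1) + p)
    (hcase : α ≥ Real.sqrt 3 * β ∨ (α < Real.sqrt 3 * β ∧ 4 * h * (β + p) ≥ p ^ 4))
    (hr : 0 < r) (hrk : r ≤ (β + p) / k) (hm : 0 < m) (hmr : m ≤ r * β) :
    m * (r * (p + 1) - 1 - m) ≤ (p - β) * β * r ^ 2 := by
  have hp0 : 0 < p := by rw [hp]; positivity
  have hk0 : 0 < k := by rw [hk]; positivity
  obtain ⟨x, rfl⟩ : ∃ x, m = r * x := ⟨m / r, by field_simp⟩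
  have hx0 : 0 < x := pos_of_mul_pos_right hm hr.le
  have hxβ : x ≤ β := le_of_mul_le_mul_left hmr hr
  obtain ⟨σ, hσ⟩ : ∃ σ, σ * (β + p) = p ^ 2 := ⟨p ^ 2 / (β + p), by field_simp⟩
  have hrσ : r * (p + 1) - 1 ≤ r * σ := by
    rw [le_div_iff₀ hk0, hk] at hrk
    have : (r * (p + 1) - 1) * (β + p) ≤ r * σ * (β + p) := by
      rw [mul_assoc r σ, hσ]
      linarith
    exact le_of_mul_le_mul_right this (by positivity)
  have hquad : x * (σ - x) ≤ α * β := by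
    rcases hcase with h3 | ⟨-, h4⟩
    · have hsq : 3 * β ^ 2 ≤ α ^ 2 := by
        have := pow_le_pow_left₀ (by positivity) h3 2
        rwa [mul_pow, Real.sq_sqrt (by norm_num)] at this
      have hσ2 : 2 * β ≤ σ := by
        refine le_of_mul_le_mul_right (?_ : 2 * β * (β + p) ≤ σ * (β + p)) (by positivity)
        rw [hσ, hp]
        nlinarith
      have hσp : σ ≤ p := by
        refine le_of_mul_le_mul_right (?_ : σ * (β + p) ≤ p * (β + p)) (by positivity)
        rw [hσ]
        nlinarith
      nlinarith [mul_nonneg (sub_nonneg.2 hxβ) (by linarith : 0 ≤ σ - β - x),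
        mul_nonneg hβ.le (sub_nonneg.2 hσp)]
    · have hσ4 : σ ^ 2 ≤ 4 * (α * β) := by
        refine le_of_mul_le_mul_right (?_ : σ ^ 2 * (β + p) ^ 2 ≤ 4 * (α * β) * (β + p) ^ 2)
          (by positivity)
        rw [← mul_pow, hσ]
        rw [hh] at h4
        linarith
      nlinarith [sq_nonneg (σ - 2 * x)]
  calc r * x * (r * (p + 1) - 1 - r * x) ≤ r * x * (r * σ - r * x) := by gcongr
    _ = x * (σ - x) * r ^ 2 := by ring
    _ ≤ α * β * r ^ 2 := by gcongr
    _ = _ := by rw [hp]; ring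

theorem stmt0 (a b c d δ δ₁ α β p h k : ℝ)
    (ha : a ∈ Ioo (0:ℝ) 1) (hb : 1 - a ≤ b)
    (hα : α = a * (b + 1)) (hβ : β = b * (1 - a)) (hp : p = a + b)
    (hh : h = α * β * (p + β)) (hk : k = β * (p + 1) + p)
    (hcase : α ≥ Real.sqrt 3 * β ∨ (α < Real.sqrt 3 * β ∧ 4 * h * (β + p) ≥ p ^ 4))
    (hc : 0 < c) (hd : 0 < d) (hcd : c / d ≤ (β + p) / k)
    (hδ₁ : δ₁ = ((a - b - 1) + Real.sqrt ((p - 1) ^ 2 + 4 * β * (c / d))) / 2)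
    (hδ : δ ∈ Ioc (a - 1) δ₁) :
    let G : ℝ → ℝ := fun x =>
      (hyp (a - 1 - δ) (b + δ) p (1 - x ^ d) - hyp (a - 1) b p (1 - x ^ c)) / (1 - x ^ c)
    let C₁ : ℝ := d / (p * c) * ((c / d - 1) * β + (a - b - 1) * δ - δ ^ 2)
    let C₂ : ℝ := 1 / (p * betaFn (a - δ) (b + 1 + δ)) - 1 / (p * betaFn a (b + 1))
    δ₁ < 0 ∧
      StrictAntiOn G (Ioo 0 1) ∧
      Tendsto G (𝓝[>] 0) (𝓝 C₂) ∧
      Tendsto G (𝓝[<] 1) (𝓝 C₁) ∧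
      0 ≤ C₁ ∧
      G '' Ioo 0 1 = Ioo C₁ C₂ := by
  intro G C₁ C₂
  obtain ⟨ha0, ha1⟩ := ha
  obtain ⟨hδ0, hδ1⟩ := hδ
  have hb0 : 0 < b := by linarith
  have hα0 : 0 < α := by rw [hα]; positivity
  have hβ0 : 0 < β := by rw [hβ]; exact mul_pos hb0 (by linarith)
  have hpαβ : p = α + β := by rw [hp, hα, hβ]; ring
  have hp0 : 0 < p := by linarith
  have hβp : β < p := by linarith
  have hk0 : 0 < k := by rw [hk]; positivity
  obtain ⟨r, hr⟩ : ∃ r, r = c / d := ⟨_, rfl⟩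
  have hr0 : 0 < r := by rw [hr]; positivity
  have hrinv : r⁻¹ = d / c := by rw [hr, inv_div]
  rw [← hr] at hcd hδ₁
  have hr1 : r < 1 := by
    refine hcd.trans_lt ((div_lt_one hk0).2 ?_)
    rw [hk]
    nlinarith
  have hr2 : r * (2 + β) ≤ 2 := by
    have h1 : (β + p) / k ≤ 2 / (2 + β) := by
      rw [div_le_div_iff₀ hk0 (by positivity), hk]
      nlinarith
    exact (le_div_iff₀ (by positivity)).1 (hcd.trans h1)
  have hδ₁neg : δ₁ < 0 := by
    have : Real.sqrt ((p - 1) ^ 2 + 4 * β * r) < b + 1 - a := by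
      rw [Real.sqrt_lt' (by linarith), hp]
      have h1 : β * r < β * 1 := mul_lt_mul_of_pos_left hr1 hβ0
      have h2 : (b + 1 - a) ^ 2 = (a + b - 1) ^ 2 + 4 * β := by rw [hβ]; ring
      linarith
    rw [hδ₁]
    linarith
  obtain ⟨m, hm⟩ : ∃ m, m = -((a - 1 - δ) * (b + δ)) := ⟨_, rfl⟩
  have hm0 : 0 < m := by
    rw [hm, ← neg_mul]
    exact mul_pos (by linarith) (by linarith)
  have hmr : m ≤ r * β := by
    have hs : 2 * δ - (a - b - 1) ≤ Real.sqrt ((p - 1) ^ 2 + 4 * β * r) := by linarith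
    have hs' := pow_le_pow_left₀ (by linarith) hs 2
    rw [Real.sq_sqrt (by positivity), hp] at hs'
    rw [hm]
    nlinarith
  have hmβ : m ≤ β := hmr.trans (mul_le_of_le_one_left hβ0.le hr1.le)
  have hmp : m < p := hmβ.trans_lt hβp
  have hdisc := mul_sub_le_of_discriminant hα0 hβ0 hpαβ hh hk hcase hr0 hcd hm0 hmr
  have hAB : a - 1 - δ + (b + δ) + 1 = p := by rw [hp]; ring
  have hAB' : a - 1 + b + 1 = p := by rw [hp]; ring
  have hβm : β = -((a - 1) * b) := by rw [hβ]; ring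
  set ψ : ℝ → ℝ := fun t =>
    hyp (a - 1 - δ) (b + δ) p (1 - (1 - t) ^ r⁻¹) - hyp (a - 1) b p t with hψ
  have hconv : StrictConvexOn ℝ (Ico 0 1) ψ :=
    strictConvexOn_hyp_sub hAB hAB' hm hβm hm0 hmβ hβp hr0 hr1 hr2 hdisc
  have hder := fun t (ht : t ∈ Ico (0 : ℝ) 1) =>
    hasDerivAt_hyp_sub hAB hAB' hm hβm hm0 hmp hβ0 hβp hr0 ht
  have hψ0 : ψ 0 = 0 := by simp [hψ, hyp_zero]
  have hG : ∀ x ∈ Ioo (0 : ℝ) 1, G x = ψ (1 - x ^ c) / (1 - x ^ c) := by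
    intro x hx
    have : (x ^ c) ^ r⁻¹ = x ^ d := by
      rw [← rpow_mul hx.1.le, hrinv, mul_div_cancel₀ _ hc.ne']
    simp only [G, hψ, sub_sub_cancel, this]
  have hmem : ∀ x ∈ Ioo (0 : ℝ) 1, 1 - x ^ c ∈ Ioo (0 : ℝ) 1 := fun x hx => by
    have := rpow_mem_Ioo hx hc
    exact ⟨by linarith [this.2], by linarith [this.1]⟩
  have hanti : StrictAntiOn G (Ioo 0 1) := by
    intro x hx y hy hxy
    rw [hG x hx, hG y hy]
    have hlt : 1 - y ^ c < 1 - x ^ c := by linarith [rpow_lt_rpow hx.1.le hxy hc]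
    have := hconv.secant_strict_mono (a := 0) (by simp) (Ioo_subset_Ico_self (hmem y hy))
      (Ioo_subset_Ico_self (hmem x hx)) (hmem y hy).1.ne' (hmem x hx).1.ne' hlt
    simpa [hψ0] using this
  have hC₁ : C₁ = p⁻¹ * (β - m / r) := by
    simp only [C₁]
    rw [hm, hr, hβ]
    field_simp
    ring
  have hC₁0 : 0 ≤ C₁ := by
    rw [hC₁]
    have : m / r ≤ β := by rw [div_le_iff₀ hr0]; linarith
    exact mul_nonneg (inv_nonneg.2 hp0.le) (by linarith)
  have hlim0 : Tendsto G (𝓝[>] 0) (𝓝 C₂) := by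
    have hto : ∀ e : ℝ, 0 < e → Tendsto (fun x : ℝ => 1 - x ^ e) (𝓝[>] 0) (𝓝[<] 1) := by
      intro e he
      refine tendsto_nhdsWithin_iff.2 ⟨?_, ?_⟩
      · have h1 : ContinuousAt (fun x : ℝ => 1 - x ^ e) 0 :=
          continuousAt_const.sub (continuousAt_rpow_const 0 e (Or.inr he.le))
        have h2 := h1.tendsto
        rw [zero_rpow he.ne', sub_zero] at h2
        exact h2.mono_left nhdsWithin_le_nhds
      · filter_upwards [self_mem_nhdsWithin] with x hx
        simpa using rpow_pos_of_pos hx e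
    have h1 := (tendsto_hyp_one hAB hp0 (by linarith) (by linarith)).comp (hto d hd)
    have h2 := (tendsto_hyp_one hAB' hp0 (by linarith) (by linarith)).comp (hto c hc)
    have h3 := (h1.sub h2).div ((hto c hc).mono_right nhdsWithin_le_nhds) one_ne_zero
    have e : C₂ = (1 / (p * betaFn (a - 1 - δ + 1) (b + δ + 1)) -
        1 / (p * betaFn (a - 1 + 1) (b + 1))) / 1 := by
      simp only [C₂]
      rw [div_one, sub_add_cancel, show a - 1 - δ + 1 = a - δ by ring, add_right_comm b δ 1]
    rw [e]
    exact h3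
  have hlim1 : Tendsto G (𝓝[<] 1) (𝓝 C₁) := by
    have h0 := (hder 0 (by simp)).tendsto_slope
    have hto : Tendsto (fun x : ℝ => 1 - x ^ c) (𝓝[<] 1) (𝓝[≠] 0) := by
      refine tendsto_nhdsWithin_iff.2 ⟨?_, ?_⟩
      · have h1 : ContinuousAt (fun x : ℝ => 1 - x ^ c) 1 :=
          continuousAt_const.sub (continuousAt_rpow_const 1 c (Or.inl one_ne_zero))
        have h2 := h1.tendsto
        rw [one_rpow, sub_self] at h2
        exact h2.mono_left nhdsWithin_le_nhds
      · filter_upwards [Ioo_mem_nhdsLT one_pos] with x hx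
        exact (hmem x hx).1.ne'
    have h1 := h0.comp hto
    simp only [sub_zero, one_rpow, sub_self, balancedSeries_zero, mul_one] at h1
    rw [hC₁]
    refine h1.congr' ?_
    filter_upwards [Ioo_mem_nhdsLT one_pos] with x hx
    rw [hG x hx, Function.comp_apply, slope_def_field]
    change (ψ (1 - x ^ c) - ψ 0) / (1 - x ^ c - 0) = _
    rw [hψ0, sub_zero, sub_zero]
  have hcont : ContinuousOn G (Ioo 0 1) := by
    refine ContinuousOn.congr (f := fun x => ψ (1 - x ^ c) / (1 - x ^ c)) ?_ hG
    intro x hx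
    have h1 : ContinuousAt (fun x : ℝ => 1 - x ^ c) x :=
      continuousAt_const.sub (continuousAt_rpow_const x c (Or.inl hx.1.ne'))
    have h2 : ContinuousAt ψ (1 - x ^ c) :=
      (hder _ (Ioo_subset_Ico_self (hmem x hx))).continuousAt
    exact ((h2.comp (f := fun x : ℝ => 1 - x ^ c) h1).div h1
      (hmem x hx).1.ne').continuousWithinAt
  exact ⟨hδ₁neg, hanti, hlim0, hlim1, hC₁0, hanti.image_Ioo_of_tendsto one_pos hcont hlim0 hlim1⟩
end

section
/- Assume a ∈ (0,1), b ≥ 1−a, and that α, β, p, h satisfy either α ≥ √3·β, or (α < √3·β and 4h(β+p) ≥ p⁴). Let c, d > 0 with 0 < c/d ≤ (β+p)/k and let δ₁ = [(a−b−1) + √((p−1)² + 4β(c/d))]/2. Then for all x ∈ (0,1) and all δ ∈ (a−1, δ₁], F(a−1, b; p; 1−x^c) + C₁(δ)(1−x^c) < F(a−1−δ, b+δ; p; 1−x^d) < F(a−1, b; p; 1−x^c) + C₂(δ)(1−x^c), where C₁(δ) = (d/(pc))·((c/d − 1)β + (a−b−1)δ − δ²) and C₂(δ) = 1/(p·B(a−δ,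 b+1+δ)) − 1/(p·B(a, b+1)). -/
open Real Set Filter Topology

/-! ### Power series with bounded coefficients -/

/-- The sum of the power series with coefficients `c`. -/
noncomputable def powSeries (c : ℕ → ℝ) (z : ℝ) : ℝ := ∑' n : ℕ, c n * z ^ n

lemma summable_mul_pow {c : ℕ → ℝ} {C z : ℝ} (hc : ∀ n, |c n| ≤ C) (hz : |z| < 1) :
    Summable fun n : ℕ => c n * z ^ n := by
  refine Summable.of_norm_bounded
    ((summable_norm_geometric_of_norm_lt_one (r := z) hz).mul_left C) fun n => ?_
  rw [norm_mul]
  exact mul_le_mul_of_nonneg_right (hc n) (norm_nonneg _)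

lemma summable_natCast_mul_pow {c : ℕ → ℝ} {C z : ℝ} (hc : ∀ n, |c n| ≤ C) (hz : |z| < 1) :
    Summable fun n : ℕ => (n * c n) * z ^ n := by
  refine Summable.of_norm_bounded
    ((summable_norm_pow_mul_geometric_of_norm_lt_one 1 (r := z) hz).mul_left C) fun n => ?_
  have h := mul_le_mul_of_nonneg_right (hc n) (norm_nonneg ((n : ℝ) ^ 1 * z ^ n))
  calc ‖(n * c n) * z ^ n‖ = |c n| * ‖(n : ℝ) ^ 1 * z ^ n‖ := by
        simp only [norm_mul, Real.norm_eq_abs, pow_one]; ring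
    _ ≤ _ := h

lemma summable_succ_mul_pow {c : ℕ → ℝ} {C z : ℝ} (hc : ∀ n, |c n| ≤ C) (hz : |z| < 1) :
    Summable fun n : ℕ => (((n : ℝ) + 1) * c (n + 1)) * z ^ n := by
  have h1 := summable_natCast_mul_pow (c := fun n => c (n + 1)) (fun n => hc (n + 1)) hz
  have h2 := summable_mul_pow (c := fun n => c (n + 1)) (fun n => hc (n + 1)) hz
  exact (h1.add h2).congr fun n => by ring

lemma hasDerivAt_powSeries {c : ℕ → ℝ} {C z : ℝ} (hc : ∀ n, |c n| ≤ C) (hz : |z| < 1) :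
    HasDerivAt (powSeries c) (powSeries (fun n => ((n : ℝ) + 1) * c (n + 1)) z) z := by
  obtain ⟨ρ, hzρ, hρ⟩ := exists_between hz
  have hρ0 : 0 ≤ ρ := (abs_nonneg z).trans hzρ.le
  have habs : |ρ| < 1 := by rwa [abs_of_nonneg hρ0]
  have hC : 0 ≤ C := (abs_nonneg _).trans (hc 0)
  have hu : Summable fun n : ℕ => C * (n * ρ ^ (n - 1)) := by
    refine Summable.mul_left C ((summable_nat_add_iff 1).1 ?_)
    have := summable_succ_mul_pow (c := fun _ => 1) (C := 1) (by simp) habs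
    exact this.congr fun n => by simp
  have hd := hasDerivAt_tsum_of_isPreconnected (y := z) (y₀ := 0) (t := Ioo (-ρ) ρ)
    (g := fun n z => c n * z ^ n) (g' := fun n z => c n * (n * z ^ (n - 1))) hu isOpen_Ioo
    isPreconnected_Ioo (fun n y _ => (hasDerivAt_pow n y).const_mul (c n))
    (fun n y hy => by
      have hy' : |y| ≤ ρ := (abs_lt.2 hy).le
      rw [norm_mul, norm_mul, norm_pow, Real.norm_natCast, Real.norm_eq_abs, Real.norm_eq_abs]
      have := hc n
      gcongr)
    (by
      have : 0 < ρ := (abs_nonneg z).trans_lt hzρ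
      constructor <;> linarith)
    (summable_mul_pow hc (by simp)) (abs_lt.1 hzρ)
  refine hd.congr_deriv ?_
  have hs : Summable fun n : ℕ => c n * (n * z ^ (n - 1)) := by
    refine (summable_nat_add_iff 1).1 ((summable_succ_mul_pow hc hz).congr fun n => ?_)
    rw [Nat.add_sub_cancel]; push_cast; ring
  rw [hs.tsum_eq_zero_add]
  simp only [Nat.cast_zero, zero_mul, mul_zero, zero_add, powSeries]
  refine tsum_congr fun n => ?_
  rw [Nat.add_sub_cancel]; push_cast; ring

lemma mul_powSeries_succ {c : ℕ → ℝ} {C z : ℝ} (hc : ∀ n, |c n| ≤ C) (hz : |z| < 1) :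
    z * powSeries (fun n => ((n : ℝ) + 1) * c (n + 1)) z = powSeries (fun n => n * c n) z := by
  unfold powSeries
  rw [(summable_natCast_mul_pow hc hz).tsum_eq_zero_add, ← tsum_mul_left]
  simp only [Nat.cast_zero, zero_mul, zero_add]
  refine tsum_congr fun n => ?_
  push_cast; ring

lemma one_sub_mul_powSeries_succ {c : ℕ → ℝ} {C z : ℝ} (hc : ∀ n, |c n| ≤ C) (hz : |z| < 1) :
    (1 - z) * powSeries (fun n => ((n : ℝ) + 1) * c (n + 1)) z =
      powSeries (fun n => ((n : ℝ) + 1) * c (n + 1) - n * c n) z := by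
  rw [sub_mul, one_mul, mul_powSeries_succ hc hz]
  unfold powSeries
  rw [← (summable_succ_mul_pow hc hz).tsum_sub (summable_natCast_mul_pow hc hz)]
  exact tsum_congr fun n => by ring

lemma powSeries_const_mul (c : ℕ → ℝ) (k z : ℝ) :
    powSeries (fun n => k * c n) z = k * powSeries c z := by
  unfold powSeries
  rw [← tsum_mul_left]
  exact tsum_congr fun n => by ring

lemma powSeries_zero (c : ℕ → ℝ) : powSeries c 0 = c 0 := by
  unfold powSeries
  rw [tsum_eq_single 0 fun n hn => by simp [hn]]
  simp

/-! ### Hypergeometric coefficients -/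

/-- The coefficients of the Gaussian hypergeometric series. -/
noncomputable def hypCoeff (a b c : ℝ) (n : ℕ) : ℝ :=
  (∏ i ∈ Finset.range n, (a + i)) * (∏ i ∈ Finset.range n, (b + i)) /
    ((∏ i ∈ Finset.range n, (c + i)) * (Nat.factorial n))

lemma hyp_eq_powSeries (a b c : ℝ) : hyp a b c = powSeries (hypCoeff a b c) := rfl

lemma hypCoeff_zero (a b c : ℝ) : hypCoeff a b c 0 = 1 := by simp [hypCoeff]

lemma hyp_zero_s1 (a b c : ℝ) : hyp a b c 0 = 1 := by
  rw [hyp_eq_powSeries, powSeries_zero, hypCoeff_zero]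

lemma prod_add_pos {c : ℝ} (hc : 0 < c) (n : ℕ) : 0 < ∏ i ∈ Finset.range n, (c + i) :=
  Finset.prod_pos fun i _ => by positivity

lemma hypCoeff_pos {a b c : ℝ} (ha : 0 < a) (hb : 0 < b) (hc : 0 < c) (n : ℕ) :
    0 < hypCoeff a b c n := by
  have := prod_add_pos ha n
  have := prod_add_pos hb n
  have := prod_add_pos hc n
  unfold hypCoeff
  positivity

lemma succ_mul_hypCoeff_succ (a b : ℝ) {c : ℝ} (hc : 0 < c) (n : ℕ) :
    ((n : ℝ) + 1) * hypCoeff a b c (n + 1) =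
      (a + n) * (b + n) / (c + n) * hypCoeff a b c n := by
  have := (prod_add_pos hc n).ne'
  have : c + n ≠ 0 := by positivity
  have : (n.factorial : ℝ) ≠ 0 := by positivity
  unfold hypCoeff
  rw [Finset.prod_range_succ, Finset.prod_range_succ, Finset.prod_range_succ, Nat.factorial_succ]
  push_cast
  field_simp

lemma succ_mul_hypCoeff_succ_eq_shift (a b : ℝ) {c : ℝ} (hc : 0 < c) (n : ℕ) :
    ((n : ℝ) + 1) * hypCoeff a b c (n + 1) =
      a * b / c * hypCoeff (a + 1) (b + 1) (c + 1) n := by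
  have h : ∀ t : ℝ, ∏ i ∈ Finset.range (n + 1), (t + i) =
      (∏ i ∈ Finset.range n, (t + 1 + i)) * t := fun t => by
    rw [Finset.prod_range_succ']
    simp only [Nat.cast_zero, add_zero, Nat.cast_add, Nat.cast_one]
    congr 1
    exact Finset.prod_congr rfl fun i _ => by ring
  have := (prod_add_pos (by linarith : 0 < c + 1) n).ne'
  have : (n.factorial : ℝ) ≠ 0 := by positivity
  unfold hypCoeff
  rw [h, h, h, Nat.factorial_succ]
  push_cast
  field_simp

lemma hypCoeff_add_one_right (a b : ℝ) {c : ℝ} (hc : 0 < c) (n : ℕ) :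
    (c + n) * hypCoeff a b (c + 1) n = c * hypCoeff a b c n := by
  have h : (∏ i ∈ Finset.range n, (c + 1 + i)) * c =
      (∏ i ∈ Finset.range n, (c + i)) * (c + n) := by
    rw [← Finset.prod_range_succ, Finset.prod_range_succ']
    simp only [Nat.cast_zero, add_zero, Nat.cast_add, Nat.cast_one]
    congr 1
    exact Finset.prod_congr rfl fun i _ => by ring
  have h1 := (prod_add_pos hc n).ne'
  have h2 := (prod_add_pos (by linarith : 0 < c + 1) n).ne'
  have : (n.factorial : ℝ) ≠ 0 := by positivity
  unfold hypCoeff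
  field_simp
  linear_combination
    -((∏ i ∈ Finset.range n, (a + i)) * ∏ i ∈ Finset.range n, (b + i)) * h

/-! ### Zero-balanced functions -/

section ZeroBalanced

variable {a b : ℝ}

lemma hypCoeff_le_one (ha : 0 < a) (hb : 0 < b) (hab : a * b ≤ a + b) (n : ℕ) :
    hypCoeff a b (a + b) n ≤ 1 := by
  induction n with
  | zero => rw [hypCoeff_zero]
  | succ n ih =>
    have h := succ_mul_hypCoeff_succ a b (add_pos ha hb) n
    have hpos := hypCoeff_pos ha hb (add_pos ha hb) n
    have hn : (0 : ℝ) ≤ n := n.cast_nonneg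
    have hle : (a + n) * (b + n) / (a + b + n) ≤ n + 1 := by
      rw [div_le_iff₀ (by positivity)]
      nlinarith
    have : ((n : ℝ) + 1) * hypCoeff a b (a + b) (n + 1) ≤ (n + 1) * 1 := by
      rw [h]
      exact mul_le_mul hle ih hpos.le (by positivity)
    exact le_of_mul_le_mul_left this (by positivity)

lemma abs_hypCoeff_le_one (ha : 0 < a) (hb : 0 < b) (hab : a * b ≤ a + b) (n : ℕ) :
    |hypCoeff a b (a + b) n| ≤ 1 := by
  rw [abs_of_pos (hypCoeff_pos ha hb (add_pos ha hb) n)]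
  exact hypCoeff_le_one ha hb hab n

lemma hypCoeff_add_one_le (ha : 0 < a) (hb : 0 < b) (n : ℕ) :
    hypCoeff a b (a + b + 1) n ≤ hypCoeff a b (a + b) n := by
  have h := hypCoeff_add_one_right a b (add_pos ha hb) n
  have hpos := hypCoeff_pos ha hb (by positivity : 0 < a + b + 1) n
  have hn : (0 : ℝ) ≤ n := n.cast_nonneg
  have : 0 < a + b := by positivity
  refine le_of_mul_le_mul_left ?_ this
  rw [← h]
  nlinarith

lemma abs_hypCoeff_add_one_le_one (ha : 0 < a) (hb : 0 < b) (hab : a * b ≤ a + b) (n : ℕ) :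
    |hypCoeff a b (a + b + 1) n| ≤ 1 := by
  rw [abs_of_pos (hypCoeff_pos ha hb (by positivity) n)]
  exact (hypCoeff_add_one_le ha hb n).trans (hypCoeff_le_one ha hb hab n)

lemma hyp_pos (ha : 0 < a) (hb : 0 < b) (hab : a * b ≤ a + b) {z : ℝ} (hz : 0 ≤ z)
    (hz1 : z < 1) : 0 < hyp a b (a + b + 1) z := by
  have hs := summable_mul_pow (abs_hypCoeff_add_one_le_one ha hb hab) (abs_lt.2 ⟨by linarith, hz1⟩)
  refine hs.tsum_pos (fun n => ?_) 0 ?_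
  · have := hypCoeff_pos ha hb (by positivity : 0 < a + b + 1) n
    positivity
  · simp [hypCoeff_zero]

lemma hyp_add_one_le (ha : 0 < a) (hb : 0 < b) (hab : a * b ≤ a + b) {z : ℝ} (hz : 0 ≤ z)
    (hz1 : z < 1) : hyp a b (a + b + 1) z ≤ hyp a b (a + b) z := by
  have hz' : |z| < 1 := abs_lt.2 ⟨by linarith, hz1⟩
  refine (summable_mul_pow (abs_hypCoeff_add_one_le_one ha hb hab) hz').tsum_le_tsum (fun n => ?_)
    (summable_mul_pow (abs_hypCoeff_le_one ha hb hab) hz')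
  exact mul_le_mul_of_nonneg_right (hypCoeff_add_one_le ha hb n) (pow_nonneg hz n)

lemma hasDerivAt_hyp_zeroBalanced (ha : 0 < a) (hb : 0 < b) (hab : a * b ≤ a + b) {z : ℝ}
    (hz : |z| < 1) :
    HasDerivAt (hyp a b (a + b)) (a * b / (a + b) * hyp a b (a + b + 1) z / (1 - z)) z := by
  have hc := abs_hypCoeff_le_one ha hb hab
  have h := hasDerivAt_powSeries hc hz
  refine h.congr_deriv ?_
  have h1 : 1 - z ≠ 0 := by linarith [(abs_lt.1 hz).2]
  rw [eq_div_iff h1, mul_comm, one_sub_mul_powSeries_succ hc hz, hyp_eq_powSeries,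
    ← powSeries_const_mul]
  congr 1
  funext n
  have h2 := hypCoeff_add_one_right a b (add_pos ha hb) n
  have : 0 < a + b + n := by positivity
  rw [succ_mul_hypCoeff_succ a b (add_pos ha hb) n]
  field_simp
  linear_combination (-a * b) * h2

lemma exists_hasDerivAt_hyp_add_one (ha : 0 < a) (hb : 0 < b) (hab : a * b ≤ a + b) {z : ℝ}
    (hz : |z| < 1) : ∃ D, HasDerivAt (hyp a b (a + b + 1)) D z ∧
      z * D = (a + b) * (hyp a b (a + b) z - hyp a b (a + b + 1) z) := by
  have hc := abs_hypCoeff_add_one_le_one ha hb hab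
  refine ⟨powSeries (fun n => ((n : ℝ) + 1) * hypCoeff a b (a + b + 1) (n + 1)) z,
    hasDerivAt_powSeries hc hz, ?_⟩
  rw [mul_powSeries_succ hc hz, hyp_eq_powSeries, hyp_eq_powSeries]
  unfold powSeries
  rw [← (summable_mul_pow (abs_hypCoeff_le_one ha hb hab) hz).tsum_sub (summable_mul_pow hc hz),
    ← tsum_mul_left]
  refine tsum_congr fun n => ?_
  linear_combination z ^ n * hypCoeff_add_one_right a b (add_pos ha hb) n

end ZeroBalanced

/-! ### The functions `F(a - 1, b - 1; a + b - 1; ·)` -/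

section OneBalanced

variable {a b : ℝ}

lemma hasDerivAt_hyp_sub_one (ha : 0 < a) (hb : 0 < b) (hc : 0 < a + b - 1)
    (hab : a * b ≤ a + b) {z : ℝ} (hz : |z| < 1) :
    HasDerivAt (hyp (a - 1) (b - 1) (a + b - 1))
      ((a - 1) * (b - 1) / (a + b - 1) * hyp a b (a + b) z) z := by
  have hshift : ∀ n : ℕ, ((n : ℝ) + 1) * hypCoeff (a - 1) (b - 1) (a + b - 1) (n + 1) =
      (a - 1) * (b - 1) / (a + b - 1) * hypCoeff a b (a + b) n := fun n => by
    have := succ_mul_hypCoeff_succ_eq_shift (a - 1) (b - 1) hc n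
    simpa only [sub_add_cancel] using this
  set k := (a - 1) * (b - 1) / (a + b - 1)
  have hbound : ∀ n, |hypCoeff (a - 1) (b - 1) (a + b - 1) n| ≤ 1 + |k| := by
    rintro (_ | n)
    · simp [hypCoeff_zero]
    · have h1 := congrArg abs (hshift n)
      have hn : (0 : ℝ) < n + 1 := by positivity
      rw [abs_mul, abs_mul, abs_of_pos hn] at h1
      have h2 := mul_le_mul_of_nonneg_left (abs_hypCoeff_le_one ha hb hab n) (abs_nonneg k)
      have h3 : (0 : ℝ) ≤ n := n.cast_nonneg
      have h4 := abs_nonneg (hypCoeff (a - 1) (b - 1) (a + b - 1) (n + 1))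
      nlinarith
  refine (hasDerivAt_powSeries hbound hz).congr_deriv ?_
  rw [hyp_eq_powSeries, ← powSeries_const_mul]
  exact congrArg (powSeries · z) (funext hshift)

lemma sum_range_hypCoeff_sub_one (hc : 0 < a + b - 1) (N : ℕ) :
    ∑ n ∈ Finset.range (N + 1), hypCoeff (a - 1) (b - 1) (a + b - 1) n =
      hypCoeff a b (a + b - 1) N := by
  induction N with
  | zero => simp [hypCoeff_zero]
  | succ N ih =>
    rw [Finset.sum_range_succ, ih]
    have h1 := succ_mul_hypCoeff_succ_eq_shift (a - 1) (b - 1) hc N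
    have h2 := succ_mul_hypCoeff_succ a b hc N
    have h3 := hypCoeff_add_one_right a b hc N
    rw [sub_add_cancel, sub_add_cancel] at h1
    have hN : (0 : ℝ) < N + 1 := by positivity
    have hcN : 0 < a + b - 1 + N := by positivity
    refine mul_left_cancel₀ hN.ne' (mul_left_cancel₀ hcN.ne' ?_)
    rw [mul_add, h1, h2]
    field_simp
    field_simp at h3
    linear_combination (a - 1) * (b - 1) * h3

lemma tendsto_hypCoeff_zeroBalanced (ha : 0 < a) (hb : 0 < b) (hc : 0 < a + b - 1) :
    Tendsto (hypCoeff a b (a + b - 1)) atTop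
      (𝓝 (Gamma (a + b - 1) / (Gamma a * Gamma b))) := by
  rw [← tendsto_add_atTop_iff_nat 1]
  have hG := ((GammaSeq_tendsto_Gamma (a + b - 1)).div
    ((GammaSeq_tendsto_Gamma a).mul (GammaSeq_tendsto_Gamma b))
    (mul_pos (Gamma_pos_of_pos ha) (Gamma_pos_of_pos hb)).ne').mul
    (tendsto_natCast_div_add_atTop (1 : ℝ))
  rw [mul_one] at hG
  refine hG.congr' ?_
  filter_upwards [eventually_gt_atTop 0] with n hn
  have hn' : (0 : ℝ) < n := by exact_mod_cast hn
  have h1 := (prod_add_pos ha (n + 1)).ne'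
  have h2 := (prod_add_pos hb (n + 1)).ne'
  have h3 := (prod_add_pos hc (n + 1)).ne'
  have h4 : (n.factorial : ℝ) ≠ 0 := by positivity
  have h5 : (n : ℝ) ^ (a + b - 1) * n = (n : ℝ) ^ a * (n : ℝ) ^ b := by
    rw [← rpow_add hn', ← rpow_add_one hn'.ne']
    congr 1; ring
  have h6 := (rpow_pos_of_pos hn' a).ne'
  have h7 := (rpow_pos_of_pos hn' b).ne'
  simp only [Pi.div_apply, GammaSeq, hypCoeff]
  rw [Nat.factorial_succ]
  push_cast
  field_simp
  linear_combination h5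

lemma hypCoeff_sub_one_succ_nonpos (ha : 0 < a) (hb : 0 < b) (hc : 0 < a + b - 1)
    (hab : (a - 1) * (b - 1) ≤ 0) (n : ℕ) :
    hypCoeff (a - 1) (b - 1) (a + b - 1) (n + 1) ≤ 0 := by
  have h1 := succ_mul_hypCoeff_succ_eq_shift (a - 1) (b - 1) hc n
  rw [sub_add_cancel, sub_add_cancel, sub_add_cancel] at h1
  have h2 := hypCoeff_pos ha hb (add_pos ha hb) n
  have h3 : (a - 1) * (b - 1) / (a + b - 1) ≤ 0 := div_nonpos_of_nonpos_of_nonneg hab hc.le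
  have hn : (0 : ℝ) < n + 1 := by positivity
  have h4 := mul_nonpos_of_nonpos_of_nonneg h3 h2.le
  rw [← h1] at h4
  exact nonpos_of_mul_nonpos_right h4 hn

lemma summable_hypCoeff_sub_one (ha : 0 < a) (hb : 0 < b) (hc : 0 < a + b - 1)
    (hab : (a - 1) * (b - 1) ≤ 0) : Summable (hypCoeff (a - 1) (b - 1) (a + b - 1)) := by
  rw [← summable_nat_add_iff 1, ← summable_neg_iff]
  refine summable_of_sum_range_le (c := 1)
    (fun n => neg_nonneg.2 (hypCoeff_sub_one_succ_nonpos ha hb hc hab n)) fun n => ?_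
  have h1 := sum_range_hypCoeff_sub_one hc n
  rw [Finset.sum_range_succ', hypCoeff_zero] at h1
  have h2 := hypCoeff_pos ha hb hc n
  simp only [Finset.sum_neg_distrib]
  linarith

lemma hyp_sub_one_one (ha : 0 < a) (hb : 0 < b) (hc : 0 < a + b - 1)
    (hab : (a - 1) * (b - 1) ≤ 0) :
    hyp (a - 1) (b - 1) (a + b - 1) 1 = 1 / ((a + b - 1) * betaFn a b) := by
  have h1 := (summable_hypCoeff_sub_one ha hb hc hab).hasSum.tendsto_sum_nat
  rw [← tendsto_add_atTop_iff_nat 1] at h1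
  simp only [sum_range_hypCoeff_sub_one hc] at h1
  have h2 := tendsto_nhds_unique h1 (tendsto_hypCoeff_zeroBalanced ha hb hc)
  rw [hyp_eq_powSeries]
  simp only [powSeries, one_pow, mul_one]
  rw [h2, betaFn]
  have h3 := Gamma_add_one hc.ne'
  rw [sub_add_cancel] at h3
  rw [h3]
  have := (Gamma_pos_of_pos ha).ne'
  have := (Gamma_pos_of_pos hb).ne'
  have := (Gamma_pos_of_pos hc).ne'
  field_simp

lemma continuousOn_hyp_sub_one (ha : 0 < a) (hb : 0 < b) (hc : 0 < a + b - 1)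
    (hab : (a - 1) * (b - 1) ≤ 0) :
    ContinuousOn (hyp (a - 1) (b - 1) (a + b - 1)) (Icc 0 1) := by
  refine continuousOn_tsum (fun n => by fun_prop) (summable_hypCoeff_sub_one ha hb hc hab).norm
    fun n x hx => ?_
  change ‖hypCoeff (a - 1) (b - 1) (a + b - 1) n * x ^ n‖ ≤ _
  rw [norm_mul, norm_pow]
  refine mul_le_of_le_one_right (norm_nonneg _) (pow_le_one₀ (norm_nonneg _) ?_)
  rw [Real.norm_eq_abs, abs_of_nonneg hx.1]
  exact hx.2

end OneBalanced

/-! ### Exponential change of variable -/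

section ExpVariable

variable {a b : ℝ}

lemma one_sub_exp_neg_mem {v : ℝ} (hv : 0 ≤ v) : 1 - exp (-v) ∈ Ico (0 : ℝ) 1 := by
  have h1 := exp_pos (-v)
  have h2 : exp (-v) ≤ 1 := exp_le_one_iff.2 (by linarith)
  exact ⟨by linarith, by linarith⟩

lemma abs_one_sub_exp_neg_lt {v : ℝ} (hv : 0 ≤ v) : |1 - exp (-v)| < 1 := by
  have h := one_sub_exp_neg_mem hv
  exact abs_lt.2 ⟨by linarith [h.1], h.2⟩

lemma hasDerivAt_one_sub_exp_neg (v : ℝ) : HasDerivAt (fun v => 1 - exp (-v)) (exp (-v)) v := by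
  have := ((hasDerivAt_id v).neg.exp).const_sub 1
  simpa using this

lemma hasDerivAt_hyp_exp (ha : 0 < a) (hb : 0 < b) (hab : a * b ≤ a + b) {v : ℝ} (hv : 0 ≤ v) :
    HasDerivAt (fun v => hyp a b (a + b) (1 - exp (-v)))
      (a * b / (a + b) * hyp a b (a + b + 1) (1 - exp (-v))) v := by
  have h := (hasDerivAt_hyp_zeroBalanced ha hb hab (abs_one_sub_exp_neg_lt hv)).comp v
    (hasDerivAt_one_sub_exp_neg v)
  refine h.congr_deriv ?_
  have := (exp_pos (-v)).ne'
  rw [sub_sub_cancel]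
  field_simp

lemma continuousAt_hyp_add_one_exp (ha : 0 < a) (hb : 0 < b) (hab : a * b ≤ a + b) {v : ℝ}
    (hv : 0 ≤ v) : ContinuousAt (fun v => hyp a b (a + b + 1) (1 - exp (-v))) v := by
  obtain ⟨D, hD, -⟩ := exists_hasDerivAt_hyp_add_one ha hb hab (abs_one_sub_exp_neg_lt hv)
  exact (hD.comp v (hasDerivAt_one_sub_exp_neg v)).continuousAt

lemma hasDerivAt_hyp_add_one_exp (ha : 0 < a) (hb : 0 < b) (hab : a * b ≤ a + b) {v : ℝ}
    (hv : 0 < v) : HasDerivAt (fun v => hyp a b (a + b + 1) (1 - exp (-v)))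
      ((a + b) * (hyp a b (a + b) (1 - exp (-v)) - hyp a b (a + b + 1) (1 - exp (-v))) /
        (exp v - 1)) v := by
  obtain ⟨D, hD, hzD⟩ := exists_hasDerivAt_hyp_add_one ha hb hab (abs_one_sub_exp_neg_lt hv.le)
  refine (hD.comp v (hasDerivAt_one_sub_exp_neg v)).congr_deriv ?_
  have h1 : exp v - 1 ≠ 0 := by linarith [add_one_lt_exp hv.ne']
  have h2 : exp (-v) * exp v = 1 := by rw [← exp_add]; simp
  rw [← hzD, eq_div_iff h1]
  linear_combination D * h2

end ExpVariable

/-! ### A comparison principle for a singular second-order differential inequality -/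

lemma HasDerivAt.nonpos_of_forall_le {f : ℝ → ℝ} {f' l t : ℝ} (hf : HasDerivAt f f' t)
    (hlt : l < t) (hmin : ∀ s ∈ Ioo l t, f t ≤ f s) : f' ≤ 0 := by
  have h := (hasDerivWithinAt_iff_tendsto_slope' (s := Ioo l t) (by simp)).1 hf.hasDerivWithinAt
  have : (𝓝[Ioo l t] t).NeBot := by
    rw [nhdsWithin_Ioo_eq_nhdsLT hlt]
    infer_instance
  refine le_of_tendsto h ?_
  filter_upwards [self_mem_nhdsWithin] with s hs
  rw [slope_def_field]
  exact div_nonpos_of_nonneg_of_nonpos (by linarith [hmin s hs]) (by linarith [hs.2])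

/-- If `I' = W`, `I 0 = 0`, `W 0 ≥ 0` and
`(eᵛ - 1) W' + (S + 2 m (eᵛ - 1)) W > κ I` with `0 ≤ κ ≤ S`, then `W > 0` on `(0, ∞)`. -/
lemma pos_of_singular_differential_ineq {I W W' : ℝ → ℝ} {S m κ : ℝ} (hm : 0 ≤ m) (hκ : 0 ≤ κ)
    (hκS : κ ≤ S) (hI0 : I 0 = 0) (hI : ∀ v, 0 ≤ v → HasDerivAt I (W v) v)
    (hWc : ContinuousOn W (Ici 0)) (hW0 : 0 ≤ W 0) (hW : ∀ v, 0 < v → HasDerivAt W (W' v) v)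
    (hineq : ∀ v, 0 < v → κ * I v < (exp v - 1) * W' v + (S + 2 * m * (exp v - 1)) * W v)
    {v : ℝ} (hv : 0 < v) : 0 < W v := by
  have hE : ∀ v : ℝ, 0 < v → 0 < exp v - 1 := fun v hv => by linarith [add_one_lt_exp hv.ne']
  have hnonneg : ∀ v, 0 ≤ v → 0 ≤ W v := by
    by_contra! hneg
    obtain ⟨V, hV, hVneg⟩ := hneg
    have hcont : ContinuousOn (fun v => W v * exp (-v)) (Icc 0 V) :=
      (hWc.mono Icc_subset_Ici_self).mul (by fun_prop)
    obtain ⟨t, ht, hmin⟩ := isCompact_Icc.exists_isMinOn (nonempty_Icc.2 hV) hcont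
    have hmin' : ∀ s ∈ Icc 0 V, W t * exp (-t) ≤ W s * exp (-s) := fun s hs => hmin hs
    set w := -(W t * exp (-t)) with hw
    have hw0 : 0 < w := by
      have := hmin' V (right_mem_Icc.2 hV)
      have := mul_neg_of_neg_of_pos hVneg (exp_pos (-V))
      linarith
    have hexp : ∀ s : ℝ, exp (-s) * exp s = 1 := fun s => by rw [← exp_add]; simp
    have hWt : W t = -(w * exp t) := by rw [hw]; linear_combination -W t * hexp t
    have ht0 : 0 < t := by
      refine lt_of_le_of_ne ht.1 fun h => ?_
      rw [← h] at hWt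
      have := mul_pos hw0 (exp_pos 0)
      linarith
    have hWlow : ∀ s ∈ Icc 0 V, -(w * exp s) ≤ W s := fun s hs => by
      have h1 := mul_le_mul_of_nonneg_right (hmin' s hs) (exp_pos s).le
      rw [mul_assoc (W s), hexp, ← neg_neg (W t * exp (-t)), ← hw] at h1
      linarith
    have hIlow : -(w * (exp t - 1)) ≤ I t := by
      have hd : ∀ s, 0 ≤ s → HasDerivAt (fun s => I s + w * (exp s - 1)) (W s + w * exp s) s :=
        fun s hs => (hI s hs).add (((hasDerivAt_exp s).sub_const 1).const_mul w)
      have hmono : MonotoneOn (fun s => I s + w * (exp s - 1)) (Icc 0 t) := by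
        refine monotoneOn_of_hasDerivWithinAt_nonneg (convex_Icc 0 t)
          (fun s hs => (hd s hs.1).continuousAt.continuousWithinAt)
          (fun s hs => (hd s (interior_subset hs).1).hasDerivWithinAt) fun s hs => ?_
        have hs' := interior_subset hs
        linarith [hWlow s ⟨hs'.1, hs'.2.trans ht.2⟩]
      have := hmono (left_mem_Icc.2 ht0.le) (right_mem_Icc.2 ht0.le) ht0.le
      simp only [hI0, exp_zero, sub_self, mul_zero, add_zero] at this
      linarith
    have hder : W' t ≤ W t := by
      have hd : HasDerivAt (fun v => W v * exp (-v)) (W' t * exp (-t) + W t * (-exp (-t))) t := by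
        refine (hW t ht0).mul ?_
        simpa using (hasDerivAt_id t).neg.exp
      have h1 := hd.nonpos_of_forall_le ht0 fun s hs =>
        hmin' s ⟨hs.1.le, hs.2.le.trans ht.2⟩
      have h2 : (W' t - W t) * exp (-t) ≤ 0 := by linarith
      linarith [nonpos_of_mul_nonpos_left h2 (exp_pos (-t))]
    have h := hineq t ht0
    have he := hE t ht0
    have h1 : (exp t - 1) * W' t ≤ (exp t - 1) * W t := mul_le_mul_of_nonneg_left hder he.le
    have h2 : -(κ * (w * (exp t - 1))) ≤ κ * I t := by
      have := mul_le_mul_of_nonneg_left hIlow hκ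
      linarith
    have h3 : κ * (w * (exp t - 1)) ≤ S * (w * (exp t - 1)) :=
      mul_le_mul_of_nonneg_right hκS (mul_pos hw0 he).le
    have h4 : 0 ≤ S * w := mul_nonneg (hκ.trans hκS) hw0.le
    have h5 : 0 ≤ (exp t - 1) * (w * exp t) := by positivity
    have h6 : 0 ≤ 2 * m * (exp t - 1) * (w * exp t) := by positivity
    rw [hWt] at h1 h
    nlinarith
  refine lt_of_le_of_ne (hnonneg v hv.le) fun h0 => ?_
  have hInn : 0 ≤ I v := by
    have hmono : MonotoneOn I (Icc 0 v) :=
      monotoneOn_of_hasDerivWithinAt_nonneg (convex_Icc 0 v)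
        (fun s hs => (hI s hs.1).continuousAt.continuousWithinAt)
        (fun s hs => (hI s (interior_subset hs).1).hasDerivWithinAt)
        fun s hs => hnonneg s (interior_subset hs).1
    have := hmono (left_mem_Icc.2 hv.le) (right_mem_Icc.2 hv.le) hv.le
    rwa [hI0] at this
  have hder := (hW v hv).nonpos_of_forall_le hv fun s hs => by
    rw [← h0]; exact hnonneg s hs.1.le
  have h := hineq v hv
  rw [← h0, mul_zero, add_zero] at h
  nlinarith [mul_nonneg hκ hInn, mul_nonneg (hE v hv).le (neg_nonneg.2 hder)]

/-! ### Monotonicity of the difference of two zero-balanced functions -/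

lemma exp_mul_sub_one_le {r v : ℝ} (hr0 : 0 ≤ r) (hr1 : r ≤ 1) :
    exp (r * v) - 1 ≤ r * (exp v - 1) := by
  have h := convexOn_exp.2 (mem_univ v) (mem_univ 0) hr0 (sub_nonneg.2 hr1) (by ring)
  simp only [smul_eq_mul, mul_zero, add_zero, exp_zero, mul_one] at h
  linarith

section Difference

variable {a₀ b₀ a₁ b₁ S y β r : ℝ}

lemma hasDerivAt_exp_mul_hyp (ha : 0 < a₁) (hb : 0 < b₁) (hS : a₁ + b₁ = S) (hab : a₁ * b₁ ≤ S)
    (y m : ℝ) {v : ℝ} (hv : 0 ≤ v) :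
    HasDerivAt (fun v => y * exp (-(m * v)) * hyp a₁ b₁ S (1 - exp (-v)))
      (y * exp (-(m * v)) * (a₁ * b₁ / S * hyp a₁ b₁ (S + 1) (1 - exp (-v)) -
        m * hyp a₁ b₁ S (1 - exp (-v)))) v := by
  subst hS
  have h1 : HasDerivAt (fun v => exp (-(m * v))) (exp (-(m * v)) * (-m)) v := by
    simpa using ((hasDerivAt_id v).const_mul m).neg.exp
  refine ((h1.const_mul y).mul (hasDerivAt_hyp_exp ha hb hab hv)).congr_deriv ?_
  ring

/-- Growth bound for `X v = y e^{-(1-r)v} F(a₁, b₁; S; 1 - e⁻ᵛ)`, whose logarithmic derivative is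
at most `(a₁ b₁ - (1 - r) S) / S`. -/
lemma sub_mul_exp_mul_hyp_le (ha : 0 < a₁) (hb : 0 < b₁) (hS : a₁ + b₁ = S) (hab : a₁ * b₁ ≤ S)
    (hy : 0 < y) {m E K : ℝ} (hK : 0 ≤ K) (hEy : E * y ≤ K)
    (hE : 0 < E → E * (a₁ * b₁ - m * S) ≤ m ^ 2 * S) {v : ℝ} (hv : 0 ≤ v) :
    (E - m ^ 2 * (exp v - 1)) * (y * exp (-(m * v)) * hyp a₁ b₁ S (1 - exp (-v))) ≤ K := by
  have hS0 : 0 < S := hS ▸ add_pos ha hb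
  have hle : ∀ s : ℝ, 0 ≤ s → hyp a₁ b₁ (S + 1) (1 - exp (-s)) ≤ hyp a₁ b₁ S (1 - exp (-s)) ∧
      0 < hyp a₁ b₁ (S + 1) (1 - exp (-s)) := fun s hs => by
    obtain ⟨h0, h1⟩ := one_sub_exp_neg_mem hs
    subst hS
    exact ⟨hyp_add_one_le ha hb hab h0 h1, hyp_pos ha hb hab h0 h1⟩
  have hX0 : ∀ s : ℝ, 0 ≤ s → 0 < y * exp (-(m * s)) * hyp a₁ b₁ S (1 - exp (-s)) :=
    fun s hs => by
      have := (hle s hs).2.trans_le (hle s hs).1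
      positivity
  rcases le_or_gt (E - m ^ 2 * (exp v - 1)) 0 with hneg | hpos
  · exact (mul_nonpos_of_nonpos_of_nonneg hneg (hX0 v hv).le).trans hK
  have hE0 : 0 < E := by
    have : 0 ≤ exp v - 1 := by linarith [add_one_le_exp v]
    nlinarith [sq_nonneg m]
  have hd : ∀ s : ℝ, 0 ≤ s → HasDerivAt
      (fun s => (E - m ^ 2 * (exp s - 1)) * (y * exp (-(m * s)) * hyp a₁ b₁ S (1 - exp (-s))))
      (-(m ^ 2 * exp s) * (y * exp (-(m * s)) * hyp a₁ b₁ S (1 - exp (-s))) +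
        (E - m ^ 2 * (exp s - 1)) * (y * exp (-(m * s)) *
          (a₁ * b₁ / S * hyp a₁ b₁ (S + 1) (1 - exp (-s)) -
            m * hyp a₁ b₁ S (1 - exp (-s))))) s := fun s hs =>
    ((((hasDerivAt_exp s).sub_const 1).const_mul (m ^ 2)).const_sub E).mul
      (hasDerivAt_exp_mul_hyp ha hb hS hab y m hs)
  have hanti : AntitoneOn
      (fun s => (E - m ^ 2 * (exp s - 1)) * (y * exp (-(m * s)) * hyp a₁ b₁ S (1 - exp (-s))))
      (Icc 0 v) := by
    refine antitoneOn_of_hasDerivWithinAt_nonpos (convex_Icc 0 v)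
      (fun s hs => (hd s hs.1).continuousAt.continuousWithinAt)
      (fun s hs => (hd s (interior_subset hs).1).hasDerivWithinAt) fun s hs => ?_
    obtain ⟨hs0, hsv⟩ := interior_subset hs
    have hexp : exp s ≤ exp v := exp_le_exp.2 hsv
    have hexp1 : 1 ≤ exp s := one_le_exp hs0
    obtain ⟨hPR, hP⟩ := hle s hs0
    have hR := hP.trans_le hPR
    set R := hyp a₁ b₁ S (1 - exp (-s))
    set P := hyp a₁ b₁ (S + 1) (1 - exp (-s))
    have hc : 0 < y * exp (-(m * s)) := by positivity
    have hcoef : 0 ≤ E - m ^ 2 * (exp s - 1) := by nlinarith [sq_nonneg m]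
    have h1 : a₁ * b₁ / S * P - m * R ≤ (a₁ * b₁ - m * S) / S * R := by
      have := mul_le_mul_of_nonneg_left hPR (by positivity : 0 ≤ a₁ * b₁ / S)
      have h2 : (a₁ * b₁ - m * S) / S * R = a₁ * b₁ / S * R - m * R := by field_simp
      linarith
    have h2 : (E - m ^ 2 * (exp s - 1)) * ((a₁ * b₁ - m * S) / S) ≤ m ^ 2 * exp s := by
      rcases le_or_gt (a₁ * b₁ - m * S) 0 with hθ | hθ
      · have := mul_nonpos_of_nonneg_of_nonpos hcoef (div_nonpos_of_nonpos_of_nonneg hθ hS0.le)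
        have := mul_nonneg (sq_nonneg m) (exp_pos s).le
        linarith
      · have h3 : E * ((a₁ * b₁ - m * S) / S) ≤ m ^ 2 := by
          rw [← mul_div_assoc, div_le_iff₀ hS0]
          exact hE hE0
        have h4 : 0 < (a₁ * b₁ - m * S) / S := div_pos hθ hS0
        nlinarith [mul_nonneg (mul_nonneg (sq_nonneg m) (sub_nonneg.2 hexp1)) h4.le,
          mul_nonneg (sq_nonneg m) (sub_nonneg.2 hexp1)]
    have h3 := mul_le_mul_of_nonneg_left h1 (mul_nonneg hcoef hc.le)
    have h4 := mul_le_mul_of_nonneg_right h2 (mul_pos hc hR).le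
    linarith
  have h := hanti (left_mem_Icc.2 hv) (right_mem_Icc.2 hv) hv
  simp only [mul_zero, neg_zero, exp_zero, sub_self, sub_zero, mul_one, hyp_zero_s1] at h
  exact h.trans hEy

lemma hasDerivAt_hyp_exp_mul (ha : 0 < a₀) (hb : 0 < b₀) (hS : a₀ + b₀ = S) (hab : a₀ * b₀ ≤ S)
    (hr0 : 0 < r) (β : ℝ) {v : ℝ} (hv : 0 ≤ v) :
    HasDerivAt (fun v => r * β * hyp a₀ b₀ S (1 - exp (-(r * v))))
      (r ^ 2 * β * (a₀ * b₀ / S) * hyp a₀ b₀ (S + 1) (1 - exp (-(r * v)))) v := by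
  subst hS
  have h1 : HasDerivAt (fun v : ℝ => r * v) r v := by simpa using (hasDerivAt_id v).const_mul r
  have h2 := (hasDerivAt_hyp_exp ha hb hab (mul_nonneg hr0.le hv)).comp v h1
  refine (h2.const_mul (r * β)).congr_deriv ?_
  ring

lemma strictMonoOn_hyp_sub_hyp (ha₀ : 0 < a₀) (hb₀ : 0 < b₀) (hS₀ : a₀ + b₀ = S)
    (hab₀ : a₀ * b₀ ≤ S) (ha₁ : 0 < a₁) (hb₁ : 0 < b₁) (hS₁ : a₁ + b₁ = S) (hab₁ : a₁ * b₁ ≤ S)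
    (hr0 : 0 < r) (hr1 : r < 1) (hy : 0 < y) (hyβ : y ≤ r * β)
    (hcurv : y * (a₁ * b₁ - (1 - r) * S) ≤ r ^ 2 * (a₀ * b₀) * β)
    (hgrow : 0 < a₁ * b₁ - (1 - r) * S - r * (a₀ * b₀) →
      (a₁ * b₁ - (1 - r) * S - r * (a₀ * b₀)) * (a₁ * b₁ - (1 - r) * S) ≤ (1 - r) ^ 2 * S) :
    StrictMonoOn (fun v => r * β * hyp a₀ b₀ S (1 - exp (-(r * v))) -
      y * exp (-((1 - r) * v)) * hyp a₁ b₁ S (1 - exp (-v))) (Ici 0) := by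
  have hS0 : 0 < S := hS₀ ▸ add_pos ha₀ hb₀
  have hα : 0 < a₀ * b₀ := mul_pos ha₀ hb₀
  have hβ : 0 < β := by
    have : 0 < r * β := hy.trans_le hyβ
    exact pos_of_mul_pos_right this hr0.le
  have hY := fun v hv => hasDerivAt_hyp_exp_mul (v := v) ha₀ hb₀ hS₀ hab₀ hr0 β hv
  have hX := fun v hv => hasDerivAt_exp_mul_hyp (v := v) ha₁ hb₁ hS₁ hab₁ y (1 - r) hv
  have hD := fun v hv => (hY v hv).sub (hX v hv)
  set m := 1 - r with hm
  have hm0 : 0 < m := by linarith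
  set W : ℝ → ℝ := fun v => r ^ 2 * β * (a₀ * b₀ / S) * hyp a₀ b₀ (S + 1) (1 - exp (-(r * v))) -
    y * exp (-(m * v)) * (a₁ * b₁ / S * hyp a₁ b₁ (S + 1) (1 - exp (-v)) -
      m * hyp a₁ b₁ S (1 - exp (-v))) with hW
  have hWpos : ∀ v, 0 < v → 0 < W v := by
    intro v hv
    refine pos_of_singular_differential_ineq (S := S) (m := m) (κ := r * (a₀ * b₀))
      (I := fun v => (r * β * hyp a₀ b₀ S (1 - exp (-(r * v))) -
        y * exp (-(m * v)) * hyp a₁ b₁ S (1 - exp (-v))) - (r * β - y))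
      (W' := fun v => r ^ 2 * β * (a₀ * b₀ / S) * (S * (hyp a₀ b₀ S (1 - exp (-(r * v))) -
          hyp a₀ b₀ (S + 1) (1 - exp (-(r * v)))) / (exp (r * v) - 1) * r) -
        (y * (exp (-(m * v)) * (-m)) * (a₁ * b₁ / S * hyp a₁ b₁ (S + 1) (1 - exp (-v)) -
            m * hyp a₁ b₁ S (1 - exp (-v))) +
          y * exp (-(m * v)) * (a₁ * b₁ / S * (S * (hyp a₁ b₁ S (1 - exp (-v)) -
              hyp a₁ b₁ (S + 1) (1 - exp (-v))) / (exp v - 1)) -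
            m * (a₁ * b₁ / S * hyp a₁ b₁ (S + 1) (1 - exp (-v))))))
      hm0.le (mul_pos hr0 hα).le ?_ ?_ (fun v hv => (hD v hv).sub_const _) ?_ ?_ ?_ ?_ hv
    · nlinarith
    · simp [hyp_zero_s1]
    · intro v hv
      have hc0 : ContinuousAt (fun v => hyp a₀ b₀ (S + 1) (1 - exp (-(r * v)))) v := by
        have h := continuousAt_hyp_add_one_exp ha₀ hb₀ (hab₀.trans_eq hS₀.symm)
          (mul_nonneg hr0.le hv)
        rw [hS₀] at h
        exact ContinuousAt.comp (f := fun v => r * v)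
          (g := fun v => hyp a₀ b₀ (S + 1) (1 - exp (-v))) h (by fun_prop)
      have hc1 := continuousAt_hyp_add_one_exp ha₁ hb₁ (hab₁.trans_eq hS₁.symm) hv
      have hc2 := (hasDerivAt_hyp_exp ha₁ hb₁ (hab₁.trans_eq hS₁.symm) hv).continuousAt
      rw [hS₁] at hc1 hc2
      exact ContinuousAt.continuousWithinAt (by fun_prop)
    · simp only [mul_zero, neg_zero, exp_zero, sub_self, mul_one, hyp_zero_s1]
      have h1 : r ^ 2 * β * (a₀ * b₀ / S) - y * (a₁ * b₁ / S - m) =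
          (r ^ 2 * (a₀ * b₀) * β - y * (a₁ * b₁ - m * S)) / S := by
        field_simp
      rw [h1]
      exact div_nonneg (by linarith) hS0.le
    · intro v hv
      have h1 : HasDerivAt (fun v : ℝ => r * v) r v := by
        simpa using (hasDerivAt_id v).const_mul r
      have h2 : HasDerivAt (fun v => exp (-(m * v))) (exp (-(m * v)) * (-m)) v := by
        simpa using ((hasDerivAt_id v).const_mul m).neg.exp
      have h3 := hasDerivAt_hyp_add_one_exp ha₀ hb₀ (hab₀.trans_eq hS₀.symm) (mul_pos hr0 hv)
      have h4 := hasDerivAt_hyp_add_one_exp ha₁ hb₁ (hab₁.trans_eq hS₁.symm) hv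
      have h5 := hasDerivAt_hyp_exp ha₁ hb₁ (hab₁.trans_eq hS₁.symm) hv.le
      rw [hS₀] at h3
      rw [hS₁] at h4 h5
      exact ((h3.comp v h1).const_mul _).sub
        ((h2.const_mul y).mul ((h4.const_mul _).sub (h5.const_mul m)))
    · intro v hv
      have hbound := sub_mul_exp_mul_hyp_le ha₁ hb₁ hS₁ hab₁ hy (m := m)
        (E := a₁ * b₁ - m * S - r * (a₀ * b₀)) (K := r * (a₀ * b₀) * (r * β - y))
        (mul_nonneg (mul_pos hr0 hα).le (by linarith)) (by nlinarith) hgrow hv.le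
      obtain ⟨hz0, hz1⟩ := one_sub_exp_neg_mem (mul_pos hr0 hv).le
      have hPR : hyp a₀ b₀ (S + 1) (1 - exp (-(r * v))) ≤ hyp a₀ b₀ S (1 - exp (-(r * v))) := by
        have := hyp_add_one_le ha₀ hb₀ (hab₀.trans_eq hS₀.symm) hz0 hz1
        rwa [hS₀] at this
      have hP : 0 < hyp a₀ b₀ (S + 1) (1 - exp (-(r * v))) := by
        have := hyp_pos ha₀ hb₀ (hab₀.trans_eq hS₀.symm) hz0 hz1
        rwa [hS₀] at this
      have he : 0 < exp v - 1 := by linarith [add_one_lt_exp hv.ne']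
      have her : 0 < exp (r * v) - 1 := by
        linarith [add_one_lt_exp (mul_pos hr0 hv).ne', mul_pos hr0 hv]
      have hcv := exp_mul_sub_one_le (v := v) hr0.le hr1.le
      set R₀ := hyp a₀ b₀ S (1 - exp (-(r * v)))
      set P₀ := hyp a₀ b₀ (S + 1) (1 - exp (-(r * v)))
      set R₁ := hyp a₁ b₁ S (1 - exp (-v))
      set P₁ := hyp a₁ b₁ (S + 1) (1 - exp (-v))
      set e := exp v - 1
      set er := exp (r * v) - 1
      set x := exp (-(m * v))
      have hratio : r ^ 2 * β * (a₀ * b₀) * (R₀ - P₀) ≤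
          e * (r ^ 2 * β * (a₀ * b₀ / S) * (S * (R₀ - P₀) / er * r)) := by
        have h1 : e * (r ^ 2 * β * (a₀ * b₀ / S) * (S * (R₀ - P₀) / er * r)) =
            r ^ 2 * β * (a₀ * b₀) * (R₀ - P₀) * (r * e / er) := by field_simp
        rw [h1]
        refine le_mul_of_one_le_right ?_ ((one_le_div her).2 hcv)
        exact mul_nonneg (by positivity) (by linarith)
      have hid : e * (y * (x * -m) * (a₁ * b₁ / S * P₁ - m * R₁) +
          y * x * (a₁ * b₁ / S * (S * (R₁ - P₁) / e) - m * (a₁ * b₁ / S * P₁))) =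
          y * x * (a₁ * b₁ * (R₁ - P₁)) -
            e * (y * x) * (2 * m * (a₁ * b₁ / S) * P₁ - m ^ 2 * R₁) := by
        field_simp
        ring
      have hpos : 0 < 2 * m * e * (r ^ 2 * β * (a₀ * b₀ / S) * P₀) := by positivity
      have hSα : S * (a₀ * b₀ / S) = a₀ * b₀ := by field_simp
      have hSq : S * (a₁ * b₁ / S) = a₁ * b₁ := by field_simp
      rw [mul_sub e, hid]
      linear_combination hratio + hbound + hpos - r ^ 2 * β * P₀ * hSα + y * x * P₁ * hSq
  refine strictMonoOn_of_hasDerivWithinAt_pos (convex_Ici 0)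
    (fun v hv => (hD v hv).continuousAt.continuousWithinAt)
    (fun v hv => (hD v (interior_subset hv)).hasDerivWithinAt) fun v hv => ?_
  rw [interior_Ici] at hv
  exact hWpos v hv

end Difference

/-! ### Chord and tangent bounds -/

lemma mul_lt_and_lt_mul_of_strictMonoOn {n D : ℝ → ℝ} {r L : ℝ} (hr : 0 < r) (hn0 : n 0 = 0)
    (hn : ∀ v, 0 ≤ v → HasDerivAt n (D v * (r * exp (-(r * v)))) v)
    (hD : StrictMonoOn D (Ici 0)) (hL : Tendsto n atTop (𝓝 L)) {v : ℝ} (hv : 0 < v) :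
    D 0 * (1 - exp (-(r * v))) < n v ∧ n v < L * (1 - exp (-(r * v))) := by
  have hg : ∀ s, HasDerivAt (fun s => 1 - exp (-(r * s))) (r * exp (-(r * s))) s := fun s => by
    have := (((hasDerivAt_id s).const_mul r).neg.exp).const_sub 1
    refine this.congr_deriv ?_
    simp; ring
  have hd : ∀ k s, 0 ≤ s → HasDerivAt (fun s => n s - k * (1 - exp (-(r * s))))
      ((D s - k) * (r * exp (-(r * s)))) s := fun k s hs => by
    refine ((hn s hs).sub ((hg s).const_mul k)).congr_deriv ?_
    ring
  have hpos : ∀ s, 0 < r * exp (-(r * s)) := fun s => mul_pos hr (exp_pos _)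
  have hlow : StrictMonoOn (fun s => n s - D 0 * (1 - exp (-(r * s)))) (Icc 0 v) := by
    refine strictMonoOn_of_hasDerivWithinAt_pos (convex_Icc 0 v)
      (fun s hs => (hd _ s hs.1).continuousAt.continuousWithinAt)
      (fun s hs => (hd _ s (interior_subset hs).1).hasDerivWithinAt) fun s hs => ?_
    rw [interior_Icc] at hs
    exact mul_pos (sub_pos.2 (hD self_mem_Ici hs.1.le hs.1)) (hpos s)
  have hup : StrictAntiOn (fun s => n s - D v * (1 - exp (-(r * s)))) (Icc 0 v) := by
    refine strictAntiOn_of_hasDerivWithinAt_neg (convex_Icc 0 v)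
      (fun s hs => (hd _ s hs.1).continuousAt.continuousWithinAt)
      (fun s hs => (hd _ s (interior_subset hs).1).hasDerivWithinAt) fun s hs => ?_
    rw [interior_Icc] at hs
    exact mul_neg_of_neg_of_pos (sub_neg.2 (hD hs.1.le hv.le hs.2)) (hpos s)
  have hfar : MonotoneOn (fun s => n s - D v * (1 - exp (-(r * s)))) (Ici v) := by
    refine monotoneOn_of_hasDerivWithinAt_nonneg (convex_Ici v)
      (fun s hs => (hd _ s (hv.le.trans hs)).continuousAt.continuousWithinAt)
      (fun s hs => (hd _ s (hv.le.trans (interior_subset hs))).hasDerivWithinAt) fun s hs => ?_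
    rw [interior_Ici] at hs
    exact mul_nonneg (sub_nonneg.2 (hD hv.le (hv.trans hs).le hs).le) (hpos s).le
  have h1 := hlow (left_mem_Icc.2 hv.le) (right_mem_Icc.2 hv.le) hv
  have h2 := hup (left_mem_Icc.2 hv.le) (right_mem_Icc.2 hv.le) hv
  have hexp : Tendsto (fun s : ℝ => exp (-(r * s))) atTop (𝓝 0) :=
    tendsto_exp_neg_atTop_nhds_zero.comp (tendsto_id.const_mul_atTop hr)
  have h3 : n v - D v * (1 - exp (-(r * v))) ≤ L - D v * (1 - 0) := by
    refine ge_of_tendsto (hL.sub ((hexp.const_sub 1).const_mul (D v))) ?_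
    filter_upwards [eventually_ge_atTop v] with s hs
    exact hfar self_mem_Ici hs hs
  simp only [hn0, mul_zero, neg_zero, exp_zero, sub_self] at h1 h2
  have h4 : exp (-(r * v)) < 1 := by
    rw [exp_lt_one_iff]
    linarith [mul_pos hr hv]
  have h5 := exp_pos (-(r * v))
  refine ⟨by linarith, ?_⟩
  nlinarith

/-! ### Parameter inequalities -/

section Parameters

variable {α β p r y : ℝ}

lemma mul_le_of_parameter_condition (hα : 0 < α) (hβ : 0 < β) (hp : p = α + β) (hr0 : 0 < r)
    (hr1 : r < 1) (hrk : r * (β * (p + 1) + p) ≤ β + p) (hy : 0 < y) (hyβ : y ≤ r * β)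
    (hcase : β ≤ α ∨ p ^ 4 ≤ 4 * (α * β * (p + β)) * (β + p)) :
    y * (p - y - (1 - r) * (p + 1)) ≤ r ^ 2 * α * β := by
  set T := r * (p + 1) - 1 with hT
  have hθ : p - y - (1 - r) * (p + 1) = T - y := by rw [hT]; ring
  rw [hθ]
  have hsq : y * (T - y) ≤ T ^ 2 / 4 := by nlinarith [sq_nonneg (T - 2 * y)]
  have hK : 0 < r ^ 2 * α * β := by positivity
  rcases le_or_gt T 0 with hT0 | hT0
  · nlinarith
  rcases hcase with h | h
  · rcases le_or_gt (2 * (r * β)) T with h1 | h1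
    · have h2 : y * (T - y) ≤ r * β * (T - r * β) := by nlinarith
      have h3 : T - r * β ≤ r * α := by rw [hT, hp]; nlinarith
      have h4 := mul_le_mul_of_nonneg_left h3 (mul_pos hr0 hβ).le
      linarith
    · have h2 : T ^ 2 ≤ (2 * (r * β)) ^ 2 := pow_le_pow_left₀ hT0.le h1.le 2
      have h3 : r ^ 2 * β * β ≤ r ^ 2 * β * α := mul_le_mul_of_nonneg_left h (by positivity)
      linarith
  · have hpos : 0 < p + β := by linarith
    have h1 : T * (p + β) ≤ r * p ^ 2 := by rw [hT]; linarith
    have h2 : (T * (p + β)) ^ 2 ≤ (r * p ^ 2) ^ 2 :=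
      pow_le_pow_left₀ (mul_pos hT0 hpos).le h1 2
    have h3 := mul_le_mul_of_nonneg_left h (sq_nonneg r)
    have h4 : T ^ 2 * (p + β) ^ 2 ≤ 4 * (r ^ 2 * α * β) * (p + β) ^ 2 := by linarith
    have h5 := le_of_mul_le_mul_right h4 (by positivity)
    linarith

lemma mul_le_sq_of_ratio_le (hα : 0 < α) (hβ : 0 < β) (hp : p = α + β) (hr0 : 0 < r)
    (hrk : r * (β * (p + 1) + p) ≤ β + p) (hy : 0 < y)
    (hE : 0 < p - y - (1 - r) * (p + 1) - r * α) :
    (p - y - (1 - r) * (p + 1) - r * α) * (p - y - (1 - r) * (p + 1)) ≤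
      (1 - r) ^ 2 * (p + 1) := by
  have hp0 : 0 < p := by linarith
  set k := β * (p + 1) + p with hk
  have hk0 : 0 < k := by positivity
  set E := p - y - (1 - r) * (p + 1) - r * α with hEdef
  set θ := p - y - (1 - r) * (p + 1) with hθdef
  have hθ0 : 0 < θ := by
    have := mul_pos hr0 hα
    linarith
  have hE1 : k * E ≤ β ^ 2 := by
    have h1 : E = r * (1 + β) - 1 - y := by rw [hEdef, hθdef, hp]; ring
    have h2 := mul_le_mul_of_nonneg_right hrk (by positivity : 0 ≤ 1 + β)
    rw [h1]
    nlinarith [mul_pos hk0 hy]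
  have hθ1 : k * θ ≤ p ^ 2 := by
    have h2 := mul_le_mul_of_nonneg_right hrk (by positivity : 0 ≤ p + 1)
    rw [hθdef]
    nlinarith [mul_pos hk0 hy]
  have hm : β * p ≤ k * (1 - r) := by rw [hk] at hrk ⊢; linarith
  have h1 : (k * E) * (k * θ) ≤ β ^ 2 * p ^ 2 :=
    mul_le_mul hE1 hθ1 (mul_pos hk0 hθ0).le (by positivity)
  have h2 : (β * p) ^ 2 ≤ (k * (1 - r)) ^ 2 := pow_le_pow_left₀ (by positivity) hm 2
  have h3 : k ^ 2 * (E * θ) ≤ k ^ 2 * (1 - r) ^ 2 := by linarith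
  have h4 := le_of_mul_le_mul_left h3 (by positivity)
  nlinarith [mul_nonneg hp0.le (sq_nonneg (1 - r))]

end Parameters

/-! ### Two-sided bounds -/

lemma tendsto_comp_one_sub_exp_neg {f : ℝ → ℝ} {s : ℝ} (hs : 0 < s)
    (hf : ContinuousOn f (Icc 0 1)) :
    Tendsto (fun v => f (1 - exp (-(s * v)))) atTop (𝓝 (f 1)) := by
  have h1 : Tendsto (fun v : ℝ => 1 - exp (-(s * v))) atTop (𝓝[Icc 0 1] 1) := by
    refine tendsto_nhdsWithin_iff.2 ⟨?_, ?_⟩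
    · have := (tendsto_exp_neg_atTop_nhds_zero.comp
        (tendsto_id.const_mul_atTop hs)).const_sub (1 : ℝ)
      simpa using this
    · filter_upwards [eventually_ge_atTop 0] with v hv
      exact Ico_subset_Icc_self (one_sub_exp_neg_mem (mul_nonneg hs.le hv))
  exact (hf 1 (by simp)).tendsto.comp h1

lemma hasDerivAt_hyp_sub_one_exp_mul {a b p y s : ℝ} (ha : 0 < a) (hb : 0 < b) (hp : 0 < p)
    (hS : a + b = p + 1) (hy : 0 < y) (hab : (a - 1) * (b - 1) = -y) (hs : 0 < s) {v : ℝ}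
    (hv : 0 ≤ v) :
    HasDerivAt (fun v => hyp (a - 1) (b - 1) p (1 - exp (-(s * v))))
      (-y / p * hyp a b (p + 1) (1 - exp (-(s * v))) * (exp (-(s * v)) * s)) v := by
  have hd : HasDerivAt (fun v => 1 - exp (-(s * v))) (exp (-(s * v)) * s) v := by
    simpa using (((hasDerivAt_id v).const_mul s).neg.exp).const_sub 1
  have h := hasDerivAt_hyp_sub_one ha hb (by linarith) (by linarith)
    (abs_one_sub_exp_neg_lt (mul_nonneg hs.le hv))
  have hp' : a + b - 1 = p := by linarith
  rw [hp', hS, hab] at h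
  exact h.comp v hd

lemma hyp_sub_hyp_bounds {a₀ b₀ a₁ b₁ p r y β : ℝ} (ha₀ : 0 < a₀) (hb₀ : 0 < b₀)
    (hS₀ : a₀ + b₀ = p + 1) (hβ : (a₀ - 1) * (b₀ - 1) = -β) (hβ0 : 0 < β)
    (ha₁ : 0 < a₁) (hb₁ : 0 < b₁) (hS₁ : a₁ + b₁ = p + 1) (hy : (a₁ - 1) * (b₁ - 1) = -y)
    (hy0 : 0 < y) (hp : 0 < p) (hr : 0 < r)
    (hmono : StrictMonoOn (fun v => r * β * hyp a₀ b₀ (p + 1) (1 - exp (-(r * v))) -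
      y * exp (-((1 - r) * v)) * hyp a₁ b₁ (p + 1) (1 - exp (-v))) (Ici 0))
    {v : ℝ} (hv : 0 < v) :
    (r * β - y) * (p * r)⁻¹ * (1 - exp (-(r * v))) <
        hyp (a₁ - 1) (b₁ - 1) p (1 - exp (-v)) - hyp (a₀ - 1) (b₀ - 1) p (1 - exp (-(r * v))) ∧
      hyp (a₁ - 1) (b₁ - 1) p (1 - exp (-v)) - hyp (a₀ - 1) (b₀ - 1) p (1 - exp (-(r * v))) <
        (1 / (p * betaFn a₁ b₁) - 1 / (p * betaFn a₀ b₀)) * (1 - exp (-(r * v))) := by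
  have hp₀ : a₀ + b₀ - 1 = p := by linarith
  have hp₁ : a₁ + b₁ - 1 = p := by linarith
  have hcont₀ := continuousOn_hyp_sub_one ha₀ hb₀ (by linarith) (by linarith)
  have hcont₁ := continuousOn_hyp_sub_one ha₁ hb₁ (by linarith) (by linarith)
  have hone₀ := hyp_sub_one_one ha₀ hb₀ (by linarith) (by linarith)
  have hone₁ := hyp_sub_one_one ha₁ hb₁ (by linarith) (by linarith)
  rw [hp₀] at hcont₀ hone₀
  rw [hp₁] at hcont₁ hone₁
  have hlim := (tendsto_comp_one_sub_exp_neg one_pos hcont₁).sub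
    (tendsto_comp_one_sub_exp_neg hr hcont₀)
  rw [hone₀, hone₁] at hlim
  have hpr : 0 < (p * r)⁻¹ := inv_pos.2 (mul_pos hp hr)
  have h := mul_lt_and_lt_mul_of_strictMonoOn (D := fun v =>
      (r * β * hyp a₀ b₀ (p + 1) (1 - exp (-(r * v))) -
        y * exp (-((1 - r) * v)) * hyp a₁ b₁ (p + 1) (1 - exp (-v))) * (p * r)⁻¹)
    hr (by simp [hyp_zero_s1]) (fun v hv => by
      refine ((hasDerivAt_hyp_sub_one_exp_mul ha₁ hb₁ hp hS₁ hy0 hy one_pos hv).sub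
        (hasDerivAt_hyp_sub_one_exp_mul ha₀ hb₀ hp hS₀ hβ0 hβ hr hv)).congr_deriv ?_
      have h4 : exp (-((1 - r) * v)) * exp (-(r * v)) = exp (-v) := by
        rw [← exp_add]; congr 1; ring
      rw [one_mul, ← h4]
      field_simp
      ring)
    (fun s hs t ht hst => mul_lt_mul_of_pos_right (hmono hs ht hst) hpr) hlim hv
  simpa only [one_mul, mul_zero, neg_zero, exp_zero, sub_self, hyp_zero_s1, mul_one] using h

theorem stmt1 (a b c d δ₁ α β p h k : ℝ)
    (ha : a ∈ Ioo (0:ℝ) 1) (hb : 1 - a ≤ b)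
    (hα : α = a * (b + 1)) (hβ : β = b * (1 - a)) (hp : p = a + b)
    (hh : h = α * β * (p + β)) (hk : k = β * (p + 1) + p)
    (hcase : α ≥ Real.sqrt 3 * β ∨ (α < Real.sqrt 3 * β ∧ 4 * h * (β + p) ≥ p ^ 4))
    (hc : 0 < c) (hd : 0 < d) (hcd : c / d ≤ (β + p) / k)
    (hδ₁ : δ₁ = ((a - b - 1) + Real.sqrt ((p - 1) ^ 2 + 4 * β * (c / d))) / 2) :
    ∀ x ∈ Ioo (0:ℝ) 1, ∀ δ ∈ Ioc (a - 1) δ₁,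
      hyp (a - 1) b p (1 - x ^ c) +
          (d / (p * c) * ((c / d - 1) * β + (a - b - 1) * δ - δ ^ 2)) * (1 - x ^ c)
        < hyp (a - 1 - δ) (b + δ) p (1 - x ^ d) ∧
      hyp (a - 1 - δ) (b + δ) p (1 - x ^ d)
        < hyp (a - 1) b p (1 - x ^ c) +
            (1 / (p * betaFn (a - δ) (b + 1 + δ)) - 1 / (p * betaFn a (b + 1))) * (1 - x ^ c) := by
  rintro x ⟨hx0, hx1⟩ δ ⟨hδa, hδ⟩
  obtain ⟨ha0, ha1⟩ := ha
  have hb0 : 0 < b := by linarith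
  have hp0 : 0 < p := by linarith
  have hα0 : 0 < α := by rw [hα]; positivity
  have hβ0 : 0 < β := by rw [hβ]; exact mul_pos hb0 (by linarith)
  have hpαβ : p = α + β := by rw [hp, hα, hβ]; ring
  have hk0 : 0 < k := by rw [hk]; positivity
  obtain ⟨r, hr⟩ : ∃ r, r = c / d := ⟨_, rfl⟩
  have hr0 : 0 < r := hr ▸ div_pos hc hd
  rw [← hr, le_div_iff₀ hk0, hk] at hcd
  have hr1 : r < 1 := by
    by_contra! h1
    nlinarith [mul_pos hβ0 hp0]
  obtain ⟨y, hy⟩ : ∃ y, y = (1 - a + δ) * (b + δ) := ⟨_, rfl⟩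
  have hbδ : 0 < b + δ := by linarith
  have hy0 : 0 < y := hy ▸ mul_pos (by linarith) hbδ
  have hyβ : y ≤ r * β := by
    have h1 : 2 * δ + (b + 1 - a) ≤ √((p - 1) ^ 2 + 4 * β * (c / d)) := by linarith
    rw [le_sqrt (by linarith) (by rw [← hr]; positivity), ← hr] at h1
    rw [hβ, hp] at h1
    rw [hβ, hy]
    linarith
  have hδ0 : δ < 0 := by
    by_contra! h1
    have : β ≤ y := by
      rw [hβ, hy]
      nlinarith
    nlinarith
  have ha₁ : 0 < a - δ := by linarith
  have hb₁ : 0 < b + 1 + δ := by linarith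
  have hq : (a - δ) * (b + 1 + δ) = p - y := by rw [hp, hy]; ring
  have hcase' : β ≤ α ∨ p ^ 4 ≤ 4 * (α * β * (p + β)) * (β + p) := by
    rcases hcase with h1 | ⟨-, h1⟩
    · left
      have : 1 ≤ √3 := by rw [one_le_sqrt]; norm_num
      nlinarith
    · right
      rwa [hh] at h1
  have hmono := strictMonoOn_hyp_sub_hyp (S := p + 1) (a₀ := a) (b₀ := b + 1) (a₁ := a - δ)
    (b₁ := b + 1 + δ) (y := y) (β := β) (r := r) ha0 (by linarith) (by rw [hp]; ring)
    (by rw [← hα]; linarith) ha₁ hb₁ (by rw [hp]; ring) (by rw [hq]; linarith) hr0 hr1 hy0 hyβ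
    (by
      rw [hq, ← hα]
      exact mul_le_of_parameter_condition hα0 hβ0 hpαβ hr0 hr1 hcd hy0 hyβ hcase')
    (by
      rw [hq, ← hα]
      exact mul_le_sq_of_ratio_le hα0 hβ0 hpαβ hr0 hcd hy0)
  have hmain := hyp_sub_hyp_bounds ha0 (by linarith) (by rw [hp]; ring) (by rw [hβ]; ring) hβ0
    ha₁ hb₁ (by rw [hp]; ring) (by rw [hy]; ring) hy0 hp0 hr0 hmono (v := -(d * log x))
    (by have := mul_neg_of_pos_of_neg hd (log_neg hx0 hx1); linarith)
  have hxd : exp (-(-(d * log x))) = x ^ d := by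
    rw [rpow_def_of_pos hx0]; congr 1; ring
  have hxc : exp (-(r * -(d * log x))) = x ^ c := by
    rw [rpow_def_of_pos hx0, hr]; congr 1; field_simp
  have e1 : a - δ - 1 = a - 1 - δ := by ring
  have e2 : b + 1 + δ - 1 = b + δ := by ring
  rw [hxd, hxc, e1, e2, add_sub_cancel_right] at hmain
  have hC : d / (p * c) * ((c / d - 1) * β + (a - b - 1) * δ - δ ^ 2) =
      (r * β - y) * (p * r)⁻¹ := by
    rw [hr, hy, hβ]
    field_simp
    ring
  rw [hC]
  exact ⟨by linarith [hmain.1], by linarith [hmain.2]⟩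
end
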